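/- Let ℓ ≡ 3 (mod 8) be a prime power of the form ℓ = (c²/2) + 1 for some integer c, and let q = ℓ². Then, in F_q, the set D = C_3^8 ∪ C_5^8 is a skew PDS corresponding to the (q,(q−1)/4,(q−11+6ℓ)/16,(q−3−2ℓ)/16)-PDS C_0^4. -/

import Mathlib

open Finset

section Defs

variable {G : Type*} [AddCommGroup G] [Fintype G] [DecidableEq G]

/-- The multiset `Δ(D)` of internal differences `x - y` (for `x ≠ y` in `D`). -/
def intDiff (D : Finset G) : Multiset G :=
  ((D ×ˢ D).filter (fun p => p.1 ≠ p.2)).val.map (fun p => p.1 - p.2)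

/-- The multiset `Δ(D, E)` of external differences `x - y` for `x ∈ D`, `y ∈ E`. -/
def extDiff (D E : Finset G) : Multiset G :=
  (D ×ˢ E).val.map (fun p => p.1 - p.2)

/-- The finset `G^*` of nonzero elements of `G`. -/
def Gstar (G : Type*) [AddCommGroup G] [Fintype G] [DecidableEq G] : Finset G :=
  Finset.univ.erase 0

/-- `A` is a `(v, k, lam, mu)` partial difference set in `G`:
`Δ(A) = lam • A^* + mu • (G^* \ A)`. -/
def IsPDS (A : Finset G) (v k lam mu : ℕ) : Prop :=
  Fintype.card G = v ∧ A.card = k ∧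
    intDiff A = lam • (A.erase 0).val + mu • (Gstar G \ A).val

/-- `D` is a `(v, k, lam, mu)` skew partial difference set corresponding to the
`(v, k, lam, mu)`-PDS `A`: `Δ(D) = lam • A^* + mu • (G^* \ A)`. -/
def IsSkewPDS (D A : Finset G) (v k lam mu : ℕ) : Prop :=
  IsPDS A v k lam mu ∧ D.card = k ∧
    intDiff D = lam • (A.erase 0).val + mu • (Gstar G \ A).val

/-- `D` is an `(n, m, k₁, …, k_m; lam, mu)` disjoint partial difference family relative
to `T`: the `D i` are pairwise disjoint subsets of `G^*` of sizes `k i`, and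
`∑ i, Δ(D i) = lam • T + mu • (G^* \ T)`. -/
def IsDPDF {ι : Type*} [Fintype ι] (D : ι → Finset G) (n m : ℕ) (k : ι → ℕ)
    (T : Finset G) (lam mu : ℕ) : Prop :=
  Fintype.card G = n ∧ Fintype.card ι = m ∧
    (∀ i, (0 : G) ∉ D i) ∧ (∀ i, (D i).card = k i) ∧
    (Pairwise (fun i j => Disjoint (D i) (D j))) ∧
    ∑ i, intDiff (D i) = lam • T.val + mu • (Gstar G \ T).val

/-- `D` is an `(n, m, k₁, …, k_m; lam, mu)` external partial difference family relative
to `T`: the `D i` are pairwise disjoint subsets of `G^*` of sizes `k i`, and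
`∑_{i ≠ j}, Δ(D i, D j) = lam • T + mu • (G^* \ T)`. -/
def IsEPDF {ι : Type*} [Fintype ι] [DecidableEq ι] (D : ι → Finset G) (n m : ℕ)
    (k : ι → ℕ) (T : Finset G) (lam mu : ℕ) : Prop :=
  Fintype.card G = n ∧ Fintype.card ι = m ∧
    (∀ i, (0 : G) ∉ D i) ∧ (∀ i, (D i).card = k i) ∧
    (Pairwise (fun i j => Disjoint (D i) (D j))) ∧
    ∑ i, ∑ j ∈ Finset.univ.erase i, extDiff (D i) (D j)
      = lam • T.val + mu • (Gstar G \ T).val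

/-- `D` is an `(n, m, k₁, …, k_m, lam)` disjoint difference family:
`∑ i, Δ(D i) = lam • G^*`. -/
def IsDDF {ι : Type*} [Fintype ι] (D : ι → Finset G) (n m : ℕ) (k : ι → ℕ)
    (lam : ℕ) : Prop :=
  Fintype.card G = n ∧ Fintype.card ι = m ∧
    (∀ i, (0 : G) ∉ D i) ∧ (∀ i, (D i).card = k i) ∧
    (Pairwise (fun i j => Disjoint (D i) (D j))) ∧
    ∑ i, intDiff (D i) = lam • (Gstar G).val

/-- `D` is an `(n, m, k₁, …, k_m, lam)` external difference family:
`∑_{i ≠ j}, Δ(D i, D j) = lam • G^*`. -/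
def IsEDF {ι : Type*} [Fintype ι] [DecidableEq ι] (D : ι → Finset G) (n m : ℕ)
    (k : ι → ℕ) (lam : ℕ) : Prop :=
  Fintype.card G = n ∧ Fintype.card ι = m ∧
    (∀ i, (0 : G) ∉ D i) ∧ (∀ i, (D i).card = k i) ∧
    (Pairwise (fun i j => Disjoint (D i) (D j))) ∧
    ∑ i, ∑ j ∈ Finset.univ.erase i, extDiff (D i) (D j) = lam • (Gstar G).val

end Defs

section Cyclotomy

variable {F : Type*} [Field F] [Fintype F] [DecidableEq F]

/-- The cyclotomic class `C_i^e = α^i ⟨α^e⟩` of order `e` in the finite field `F`,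
with respect to the primitive element `α`.  (Since `α` has multiplicative order at most
`|F| - 1`, letting `j` range over `0, …, |F| - 1` captures the whole class.) -/
def cycClass (α : F) (e i : ℕ) : Finset F :=
  (Finset.range (Fintype.card F)).image (fun j => α ^ (e * j + i))

/-- `α` is a primitive element of the finite field `F`: every nonzero element of `F`
is a power of `α`. -/
def IsPrimitiveElt (α : F) : Prop :=
  ∀ x : F, x ≠ 0 → ∃ n : ℕ, α ^ n = x

end Cyclotomy

/-!
Write `ℓ = 8k + 3` and let `K` be the subfield of `F` with `ℓ` elements. `C_0^4` is a union of
`K`-lines through the origin and `D = C_3^8 ∪ C_5^8` is a union of orbits of the nonzero squares of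
`K`. In the `K`-plane `F`, with an alternating form `ω`, a difference `a u - b v = g` of dependent
`u, v` is a difference inside a line, and for independent `u, v` the coefficients `a, b` are
determined by `ω`; expanding the condition that they are squares gives
`4 (4k+1)² #{g = x - y} = const + T(g)²`, where `T(g) = ∑ u ∈ D, χ (ω (g, u))`.

By symmetry `T (α ^ n) = 0` for `n ≡ 2 mod 4`, and `T²` takes only two further values `T₀²` (`n`
divisible by 4) and `T₁²` (`n` odd). Counting all differences gives `T₀² + 2 T₁² = 2 (4k+1)² ℓ`, so
`T₁ = (4k+1) s` with `s² + 2 y² = ℓ`. By Euler's criterion, `T` is modulo `p` a polynomial of small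
degree with a coefficient `± (4k+1).choose k * ∑ u ∈ D, u ^ e`, which is nonzero; hence `p ∤ s`.
Finally `1 + 2 (c/2)² = ℓ` is another such representation of the prime power `ℓ`, and such
representations are unique, so `s² = 1`, which determines all difference counts.
-/

theorem pow_mod_eight_of_mod_eight_eq_three {p : ℕ} (hp : p % 8 = 3) (n : ℕ) :
    p ^ n % 8 = 1 ∨ p ^ n % 8 = 3 := by
  induction n with
  | zero => exact .inl rfl
  | succ n ih =>
    rw [pow_succ, Nat.mul_mod, hp]
    rcases ih with ih | ih <;> rw [ih] <;> decide

theorem mod_eight_eq_three_of_pow_mod_eight_eq_three {p n : ℕ} (h : p ^ n % 8 = 3) :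
    p % 8 = 3 := by
  have even_pow (j : ℕ) : p ^ (2 * j) % 8 = 0 ∨ p ^ (2 * j) % 8 = 1 ∨ p ^ (2 * j) % 8 = 4 := by
    have hlt := Nat.mod_lt (p ^ j) (show 0 < 8 by norm_num)
    rw [mul_comm, pow_mul, Nat.pow_mod]
    interval_cases p ^ j % 8 <;> simp
  obtain ⟨j, rfl | rfl⟩ := n.even_or_odd'
  · have := even_pow j
    omega
  · rw [pow_succ, Nat.mul_mod] at h
    have := Nat.mod_lt p (show 0 < 8 by norm_num)
    rcases even_pow j with hs | hs | hs <;> rw [hs] at h <;> omega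

theorem mod_add_mod_lt_of_dvd {P k : ℕ} (hP : P % 8 = 1 ∨ P % 8 = 3) (h : P ∣ 8 * k + 3) :
    k % P + (3 * k + 1) % P < P := by
  have hmod : (3 * k + 1) % P = (3 * (k % P) + 1) % P := by simp [Nat.add_mod, Nat.mul_mod]
  have hk : 8 * k + 3 = 8 * (k % P) + 3 + P * (8 * (k / P)) := by
    conv_lhs => rw [← Nat.mod_add_div k P]
    ring
  obtain ⟨c, hc⟩ : P ∣ 8 * (k % P) + 3 := (Nat.dvd_add_left ⟨_, rfl⟩).1 (hk ▸ h)
  have hlt : k % P < P := Nat.mod_lt k (by omega)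
  rw [hmod]
  clear hk hmod h
  generalize k % P = r at *
  obtain rfl | rfl : c = 1 ∨ c = 3 := by
    have hc8 : c < 8 := by
      by_contra! hc8
      nlinarith
    interval_cases c <;> omega
  · rw [Nat.mod_eq_of_lt (by omega)]
    omega
  · rw [Nat.mod_eq_sub_mod (by omega), Nat.mod_eq_of_lt (by omega)]
    omega

/-- By Kummer's theorem: adding `k` and `3 * k + 1` in base `p` produces no carry. -/
theorem not_dvd_choose_of_pow_eq {p n k : ℕ} (hp : p.Prime) (h : p ^ n = 8 * k + 3) :
    ¬ p ∣ (4 * k + 1).choose k := by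
  have hp8 : p % 8 = 3 := mod_eight_eq_three_of_pow_mod_eight_eq_three (n := n) (by omega)
  have hlog : Nat.log p (4 * k + 1) < n := Nat.log_lt_of_lt_pow (by omega) (by omega)
  have hle : k ≤ 4 * k + 1 := by omega
  have no_carry : ∀ i ∈ Ico 1 n, ¬ p ^ i ≤ k % p ^ i + (4 * k + 1 - k) % p ^ i := by
    intro i hi
    rw [not_le, show 4 * k + 1 - k = 3 * k + 1 by omega]
    exact mod_add_mod_lt_of_dvd (pow_mod_eight_of_mod_eight_eq_three hp8 i)
      (h ▸ pow_dvd_pow p (mem_Ico.1 hi).2.le)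
  have hfac := Nat.factorization_choose hp hle hlog
  rw [filter_false_of_mem no_carry, card_empty] at hfac
  exact fun hdvd => (hp.factorization_pos_of_dvd (Nat.choose_pos hle).ne' hdvd).ne' hfac

theorem sq_eq_sq_of_dvd_mul_sub_mul {d l a b x y : ℤ} (hd : 2 ≤ d) (hl : l ≠ 0)
    (hab : a ^ 2 + d * b ^ 2 = l) (hxy : x ^ 2 + d * y ^ 2 = l) (hdvd : l ∣ a * y - b * x) :
    a ^ 2 = x ^ 2 := by
  have hnorm : (a * x + d * b * y) ^ 2 + d * (a * y - b * x) ^ 2 = l ^ 2 := by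
    linear_combination (x ^ 2 + d * y ^ 2) * hab + l * hxy
  have hcross : a * y - b * x = 0 := by
    obtain ⟨r, hr⟩ := hdvd
    have hl2 : 0 < l ^ 2 := by positivity
    have hr1 : r ^ 2 < 1 := by
      rw [hr] at hnorm
      have := sq_nonneg (a * x + d * b * y)
      nlinarith [mul_nonneg (sub_nonneg.2 hd) (sq_nonneg (l * r))]
    have hr0 : r = 0 := pow_eq_zero_iff two_ne_zero |>.1 (by nlinarith [sq_nonneg r])
    rw [hr, hr0, mul_zero]
  have : l * (a ^ 2 - x ^ 2) = 0 := by
    linear_combination d * (a * y + b * x) * hcross + x ^ 2 * hab - a ^ 2 * hxy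
  exact sub_eq_zero.1 ((mul_eq_zero.1 this).resolve_left hl)

theorem sq_eq_sq_of_sq_add_mul_sq_eq_prime_pow {p n : ℕ} (hp : p.Prime) (hp2 : p ≠ 2) (hn : n ≠ 0)
    {d a b x y : ℤ} (hd : 2 ≤ d) (hab : a ^ 2 + d * b ^ 2 = (p : ℤ) ^ n)
    (hxy : x ^ 2 + d * y ^ 2 = (p : ℤ) ^ n) (ha : ¬ (p : ℤ) ∣ a) (hx : ¬ (p : ℤ) ∣ x) :
    a ^ 2 = x ^ 2 := by
  have hpz : Prime (p : ℤ) := Nat.prime_iff_prime_int.1 hp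
  have not_dvd {u v : ℤ} (huv : u ^ 2 + d * v ^ 2 = (p : ℤ) ^ n) (hu : ¬ (p : ℤ) ∣ u) :
      ¬ (p : ℤ) ∣ d * v ^ 2 := fun h =>
    hu (hpz.dvd_of_dvd_pow ((dvd_add_left h).1 (huv ▸ dvd_pow_self _ hn)))
  have hpd : ¬ (p : ℤ) ∣ d := fun h => not_dvd hab ha (h.mul_right _)
  have hpy : ¬ (p : ℤ) ∣ y := fun h => not_dvd hxy hx ((dvd_pow h two_ne_zero).mul_left _)
  have hp2' : ¬ (p : ℤ) ∣ 2 := fun h =>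
    hp2 ((Nat.prime_dvd_prime_iff_eq hp Nat.prime_two).1 (by exact_mod_cast h))
  have hl : ((p : ℤ) ^ n) ≠ 0 := pow_ne_zero _ hpz.ne_zero
  have coprime_pow {u : ℤ} (hu : ¬ (p : ℤ) ∣ u) : IsCoprime ((p : ℤ) ^ n) u :=
    ((Prime.coprime_iff_not_dvd hpz).2 hu).pow_left
  have hprod : (p : ℤ) ^ n ∣ (a * y - b * x) * (a * y + b * x) :=
    (coprime_pow hpd).dvd_of_dvd_mul_left
      ⟨a ^ 2 - x ^ 2, by linear_combination a ^ 2 * hxy - x ^ 2 * hab⟩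
  have hnot_both : ¬ ((p : ℤ) ∣ a * y - b * x ∧ (p : ℤ) ∣ a * y + b * x) := by
    rintro ⟨hsub, hadd⟩
    have hdvd : (p : ℤ) ∣ 2 * (a * y) := by
      rw [show 2 * (a * y) = (a * y - b * x) + (a * y + b * x) by ring]
      exact dvd_add hsub hadd
    simp [hpz.dvd_mul, hp2', ha, hpy] at hdvd
  rcases not_and_or.1 hnot_both with h | h
  · refine sq_eq_sq_of_dvd_mul_sub_mul (b := -b) (y := y) hd hl (by simpa using hab) hxy ?_
    rw [neg_mul, sub_neg_eq_add]
    exact (coprime_pow h).dvd_of_dvd_mul_left hprod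
  · exact sq_eq_sq_of_dvd_mul_sub_mul hd hl hab hxy ((coprime_pow h).dvd_of_dvd_mul_right hprod)

section DiffCount

variable {G : Type*} [AddCommGroup G] [DecidableEq G]

/-- The number of ordered pairs of elements of `D` with difference `g`: for `g ≠ 0`, the
multiplicity of `g` in `Δ(D)`. -/
def diffCount (D : Finset G) (g : G) : ℕ :=
  #{p ∈ D ×ˢ D | p.1 - p.2 = g}

theorem count_intDiff (D : Finset G) {g : G} (hg : g ≠ 0) :
    (intDiff D).count g = diffCount D g := by
  rw [intDiff, Multiset.count_map, ← filter_val, card_val, filter_filter, diffCount]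
  congr 1
  refine filter_congr fun p _ => ⟨fun h => h.2.symm, fun h => ⟨?_, h.symm⟩⟩
  exact sub_ne_zero.1 (h ▸ hg)

theorem zero_notMem_intDiff (D : Finset G) : (0 : G) ∉ intDiff D := by
  simp only [intDiff, Multiset.mem_map, mem_val, mem_filter]
  rintro ⟨p, ⟨-, hp⟩, h⟩
  exact hp (sub_eq_zero.1 h)

theorem intDiff_eq_of_diffCount_eq [Fintype G] {D A : Finset G} {lam mu : ℕ}
    (h : ∀ g ≠ 0, diffCount D g = if g ∈ A then lam else mu) :
    intDiff D = lam • (A.erase 0).val + mu • (Gstar G \ A).val := by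
  ext g
  rw [Multiset.count_add, Multiset.count_nsmul, Multiset.count_nsmul,
    Multiset.count_eq_of_nodup (nodup _), Multiset.count_eq_of_nodup (nodup _)]
  simp only [mem_val, Gstar, mem_erase, mem_sdiff, mem_univ, and_true]
  rcases eq_or_ne g 0 with rfl | hg
  · simp [Multiset.count_eq_zero_of_notMem (zero_notMem_intDiff D)]
  · rw [count_intDiff D hg, h g hg]
    by_cases hgA : g ∈ A <;> simp [hg, hgA]

theorem sum_diffCount [Fintype G] (D : Finset G) :
    ∑ g ∈ univ.erase 0, (diffCount D g : ℤ) = (#D : ℤ) ^ 2 - #D := by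
  have hmaps : ∀ p ∈ D.offDiag, p.1 - p.2 ∈ univ.erase (0 : G) := fun p hp => by
    simpa [sub_eq_zero] using (mem_offDiag.1 hp).2.2
  have hfiber : ∀ g ∈ univ.erase (0 : G), #{p ∈ D.offDiag | p.1 - p.2 = g} = diffCount D g := by
    intro g hg
    refine congrArg card (Finset.ext fun p => ?_)
    simp only [mem_filter, mem_offDiag, mem_product]
    exact ⟨fun h => ⟨⟨h.1.1, h.1.2.1⟩, h.2⟩,
      fun h => ⟨⟨h.1.1, h.1.2, sub_ne_zero.1 (h.2 ▸ ne_of_mem_erase hg)⟩, h.2⟩⟩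
  rw [← Nat.cast_sum, ← sum_congr rfl hfiber, ← card_eq_sum_card_fiberwise hmaps, offDiag_card,
    Nat.cast_sub (Nat.le_mul_self _)]
  push_cast
  ring

theorem diffCount_neg (D : Finset G) (g : G) : diffCount D (-g) = diffCount D g := by
  have hswap : diffCount D (-g) = #{p ∈ D ×ˢ D | p.2 - p.1 = -g} :=
    card_nbij' Prod.swap Prod.swap (fun p => by simp +contextual) (fun p => by simp +contextual)
      (fun _ _ => rfl) (fun _ _ => rfl)
  rw [hswap, diffCount]
  exact congrArg card (filter_congr fun p _ => by rw [← neg_sub, neg_inj])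

end DiffCount

section Stable

variable {K V : Type*} [Field K] [AddCommGroup V] [Module K V] [DecidableEq V]

/-- Multiplication by a scalar from `Γ` permutes `S`, which makes difference counts constant along
`Γ`-orbits. With `S = Γ` and `0 ∉ Γ` it makes `Γ` multiplicatively closed. -/
def SMulStable (Γ : Finset K) (S : Finset V) : Prop :=
  ∀ a ∈ Γ, ∀ u, a • u ∈ S ↔ u ∈ S

theorem diffCount_smul_smul {Γ : Finset K} {S : Finset V} (h0 : (0 : K) ∉ Γ)
    (hS : SMulStable Γ S) {a b : K} (ha : a ∈ Γ) (hb : b ∈ Γ) (g : V) :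
    #{p ∈ S ×ˢ S | a • p.1 - b • p.2 = g} = diffCount S g := by
  have ha0 : a ≠ 0 := ne_of_mem_of_not_mem ha h0
  have hb0 : b ≠ 0 := ne_of_mem_of_not_mem hb h0
  refine card_nbij' (fun p => (a • p.1, b • p.2)) (fun p => (a⁻¹ • p.1, b⁻¹ • p.2)) ?_ ?_ ?_ ?_
  · rintro ⟨x, y⟩ h
    simpa [hS a ha, hS b hb] using h
  · rintro ⟨x, y⟩ h
    simpa [← hS a ha (a⁻¹ • x), ← hS b hb (b⁻¹ • y), smul_smul, ha0, hb0] using h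
  · rintro ⟨x, y⟩ -
    simp [smul_smul, ha0, hb0]
  · rintro ⟨x, y⟩ -
    simp [smul_smul, ha0, hb0]

theorem diffCount_smul {Γ : Finset K} {S : Finset V} (h0 : (0 : K) ∉ Γ) (hS : SMulStable Γ S)
    {a : K} (ha : a ∈ Γ) (g : V) : diffCount S (a • g) = diffCount S g := by
  rw [← diffCount_smul_smul h0 hS ha ha]
  simp only [← smul_sub, (smul_right_injective V (ne_of_mem_of_not_mem ha h0)).eq_iff]
  rfl

theorem card_sq_mul_diffCount_eq_sum {Γ : Finset K} {S : Finset V} (h0 : (0 : K) ∉ Γ)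
    (hS : SMulStable Γ S) (g : V) :
    #Γ ^ 2 * diffCount S g =
      ∑ p ∈ S ×ˢ S, #{c ∈ Γ ×ˢ Γ | c.1 • p.1 - c.2 • p.2 = g} := by
  calc #Γ ^ 2 * diffCount S g = ∑ c ∈ Γ ×ˢ Γ, #{p ∈ S ×ˢ S | c.1 • p.1 - c.2 • p.2 = g} := by
        rw [sum_congr rfl fun c hc => diffCount_smul_smul h0 hS (mem_product.1 hc).1
          (mem_product.1 hc).2 g, sum_const, card_product, smul_eq_mul, sq]
    _ = _ := sum_card_bipartiteAbove_eq_sum_card_bipartiteBelow _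

theorem card_sub_one_mul_diffCount [Fintype K] [DecidableEq K] {Γ : Finset K} (hΓ : SMulStable Γ Γ)
    (h0 : (0 : K) ∉ Γ) (hpm : ∀ s ≠ 0, s ∈ Γ ∨ -s ∈ Γ) {s : K} (hs : s ≠ 0) :
    ((Fintype.card K : ℤ) - 1) * diffCount Γ s = (#Γ : ℤ) ^ 2 - #Γ := by
  have to_one {t : K} (ht : t ≠ 0) : diffCount Γ t = diffCount Γ 1 := by
    rcases hpm t ht with h | h
    · simpa using diffCount_smul h0 hΓ h 1
    · rw [← diffCount_neg]
      simpa using diffCount_smul h0 hΓ h 1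
  rw [← sum_diffCount, sum_congr rfl fun t ht => by rw [to_one (ne_of_mem_erase ht)], to_one hs,
    sum_const, card_erase_of_mem (mem_univ _), card_univ, nsmul_eq_mul,
    Nat.cast_sub Fintype.card_pos]
  simp

end Stable

section Plane

variable {K V : Type*} [Field K] [AddCommGroup V] [Module K V] {ω : LinearMap.BilinForm K V}

theorem eq_smul_add_smul_of_isAlt (hV : Module.finrank K V = 2) (hω : ω.IsAlt) {u v : V}
    (huv : ω u v ≠ 0) (g : V) : g = (ω g v / ω u v) • u + (ω u g / ω u v) • v := by
  have hli : LinearIndependent K ![u, v] := by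
    refine LinearIndependent.pair_iff.2 fun a b hab => ⟨?_, ?_⟩
    · have : a * ω u v = 0 := by simpa [hω.self_eq_zero] using congrArg (ω · v) hab
      exact (mul_eq_zero.1 this).resolve_right huv
    · have : b * ω u v = 0 := by simpa [hω.self_eq_zero] using congrArg (ω u ·) hab
      exact (mul_eq_zero.1 this).resolve_right huv
  have hspan := hli.span_eq_top_of_card_eq_finrank (by simp [hV])
  obtain ⟨a, b, rfl⟩ : ∃ a b : K, a • u + b • v = g := by
    rw [← Submodule.mem_span_pair, ← Matrix.range_cons_cons_empty u v ![], hspan]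
    trivial
  simp [hω.self_eq_zero, huv]

theorem exists_eq_smul_of_isAlt (hV : Module.finrank K V = 2) (hω : ω.IsAlt)
    (hnd : ω.Nondegenerate) {u v : V} (hu : u ≠ 0) (huv : ω u v = 0) : ∃ t : K, v = t • u := by
  obtain ⟨w, hw⟩ : ∃ w, ω u w ≠ 0 := by
    by_contra! h
    exact hu (hnd.1 u h)
  refine ⟨ω v w / ω u w, ?_⟩
  simpa [huv] using eq_smul_add_smul_of_isAlt hV hω hw v

/-- `S` is a union of rays `Γ • u`, at most one on each line through the origin, so that the
differences within a line are governed by those of `Γ`. -/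
structure IsRayUnion (Γ : Finset K) (S : Finset V) : Prop where
  zero_notMem : (0 : V) ∉ S
  stable : SMulStable Γ S
  mem_of_smul_mem : ∀ u ∈ S, ∀ t : K, t • u ∈ S → t ∈ Γ

theorem IsRayUnion.smul_mem_iff {Γ : Finset K} {S : Finset V} (hS : IsRayUnion Γ S) {u : V}
    (hu : u ∈ S) (t : K) : t • u ∈ S ↔ t ∈ Γ :=
  ⟨hS.mem_of_smul_mem u hu t, fun ht => (hS.stable t ht u).2 hu⟩

variable [DecidableEq K]

theorem IsRayUnion.card_filter_eq_zero {Γ : Finset K} {S : Finset V} (hS : IsRayUnion Γ S)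
    (hV : Module.finrank K V = 2) (hω : ω.IsAlt) (hnd : ω.Nondegenerate) {u : V} (hu : u ∈ S) :
    #{v ∈ S | ω u v = 0} = #Γ := by
  have hu0 : u ≠ 0 := ne_of_mem_of_not_mem hu hS.zero_notMem
  symm
  refine card_nbij (fun t => t • u) ?_ ?_ ?_
  · intro t ht
    simpa [hS.smul_mem_iff hu, hω.self_eq_zero] using ht
  · exact (smul_left_injective K hu0).injOn
  · intro v hv
    obtain ⟨hvS, huv⟩ := mem_filter.1 hv
    obtain ⟨t, rfl⟩ := exists_eq_smul_of_isAlt hV hω hnd hu0 huv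
    exact ⟨t, (hS.smul_mem_iff hu t).1 hvS, rfl⟩

variable [DecidableEq V]

theorem card_smul_sub_smul_eq_of_ne_zero (hV : Module.finrank K V = 2) (hω : ω.IsAlt)
    (Γ : Finset K) {u v : V} (huv : ω u v ≠ 0) (g : V) :
    #{c ∈ Γ ×ˢ Γ | c.1 • u - c.2 • v = g} =
      if ω g v / ω u v ∈ Γ ∧ ω g u / ω u v ∈ Γ then 1 else 0 := by
  have hsol (a b : K) : a • u - b • v = g ↔ a = ω g v / ω u v ∧ b = ω g u / ω u v := by
    have hgu : ω u g = -ω g u := (hω.neg_eq g u).symm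
    have hvu : ω v u = -ω u v := (hω.neg_eq u v).symm
    constructor
    · rintro rfl
      simp [hω.self_eq_zero, hvu, huv]
    · rintro ⟨rfl, rfl⟩
      conv_rhs => rw [eq_smul_add_smul_of_isAlt hV hω huv g, hgu, neg_div, neg_smul]
      exact sub_eq_add_neg _ _
  simp only [hsol, ← Prod.mk.injEq, Prod.mk.eta]
  rw [filter_eq', apply_ite card]
  simp

theorem card_smul_sub_smul_smul_eq (hV : Module.finrank K V = 2) (hω : ω.IsAlt)
    (hnd : ω.Nondegenerate) {Γ : Finset K} (h0 : (0 : K) ∉ Γ) (hΓ : SMulStable Γ Γ) {ν : ℕ}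
    (hν : ∀ s ≠ 0, diffCount Γ s = ν) {u g : V} (hu : u ≠ 0) (hg : g ≠ 0) {t : K} (ht : t ∈ Γ) :
    #{c ∈ Γ ×ˢ Γ | c.1 • u - c.2 • t • u = g} = if ω g u = 0 then ν else 0 := by
  split_ifs with hgu
  · obtain ⟨s, rfl⟩ := exists_eq_smul_of_isAlt hV hω hnd hu (by rw [← hω.neg_eq g u, hgu, neg_zero])
    have hs : s ≠ 0 := fun h => hg (by rw [h, zero_smul])
    have h1 : (1 : K) ∈ Γ := (hΓ t ht 1).1 (by rwa [smul_eq_mul, mul_one])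
    rw [← hν s hs, ← diffCount_smul_smul h0 hΓ h1 ht]
    refine congrArg card (filter_congr fun c _ => ?_)
    rw [smul_smul, ← sub_smul, (smul_left_injective K hu).eq_iff, one_smul, smul_eq_mul, mul_comm t]
  · refine card_eq_zero.2 (filter_false_of_mem fun c _ hc => hgu ?_)
    simp [← hc, hω.self_eq_zero]

/-- Averaging over `Γ × Γ` turns the count of differences into a count of pairs of points: the
pairs spanning the plane solve `a • u - b • v = g` uniquely, by Cramer's rule. -/
theorem IsRayUnion.card_sq_mul_diffCount {Γ : Finset K} {S : Finset V} (hS : IsRayUnion Γ S)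
    (hV : Module.finrank K V = 2) (hω : ω.IsAlt) (hnd : ω.Nondegenerate) (h0 : (0 : K) ∉ Γ)
    (hΓ : SMulStable Γ Γ) {ν : ℕ} (hν : ∀ s ≠ 0, diffCount Γ s = ν) {g : V} (hg : g ≠ 0) :
    #Γ ^ 2 * diffCount S g =
      ∑ u ∈ S, ∑ v ∈ S with ω u v ≠ 0, (if ω g v / ω u v ∈ Γ ∧ ω g u / ω u v ∈ Γ then 1 else 0) +
        #Γ * ν * #{u ∈ S | ω g u = 0} := by
  have hdep : ∀ u ∈ S, ∀ v ∈ S, ω u v = 0 →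
      #{c ∈ Γ ×ˢ Γ | c.1 • u - c.2 • v = g} = if ω g u = 0 then ν else 0 := by
    intro u hu v hv huv
    have hu0 : u ≠ 0 := ne_of_mem_of_not_mem hu hS.zero_notMem
    obtain ⟨t, rfl⟩ := exists_eq_smul_of_isAlt hV hω hnd hu0 huv
    exact card_smul_sub_smul_smul_eq hV hω hnd h0 hΓ hν hu0 hg (hS.mem_of_smul_mem u hu t hv)
  rw [card_sq_mul_diffCount_eq_sum h0 hS.stable, sum_product, card_filter, mul_sum,
    ← sum_add_distrib]
  refine sum_congr rfl fun u hu => ?_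
  rw [← sum_filter_add_sum_filter_not S (fun v => ω u v ≠ 0)]
  congr 1
  · exact sum_congr rfl fun v hv =>
      card_smul_sub_smul_eq_of_ne_zero hV hω Γ (mem_filter.1 hv).2 g
  · simp only [not_not]
    rw [sum_congr rfl fun v hv => hdep u hu v (mem_filter.1 hv).1 (mem_filter.1 hv).2,
      sum_const, hS.card_filter_eq_zero hV hω hnd hu]
    split_ifs <;> simp

end Plane

section Squares

variable {K : Type*} [Field K] [Fintype K]

theorem ringChar_ne_two_of_card_mod_four (h : Fintype.card K % 4 = 3) : ringChar K ≠ 2 := by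
  intro h2
  have := FiniteField.even_card_of_char_two h2
  omega

variable (K) [DecidableEq K]

/-- The nonzero squares of the finite field `K` of odd order, the scalars that preserve
`C_3^8 ∪ C_5^8`. -/
def nonzeroSquares : Finset K :=
  {a | quadraticChar K a = 1}

variable {K}

theorem card_univ_erase_zero : (#(univ.erase (0 : K)) : ℤ) = Fintype.card K - 1 := by
  rw [card_erase_of_mem (mem_univ _), card_univ, Nat.cast_pred Fintype.card_pos]

theorem mem_nonzeroSquares {a : K} : a ∈ nonzeroSquares K ↔ quadraticChar K a = 1 := by
  simp [nonzeroSquares]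

theorem zero_notMem_nonzeroSquares : (0 : K) ∉ nonzeroSquares K := by
  simp [mem_nonzeroSquares]

theorem smulStable_nonzeroSquares : SMulStable (nonzeroSquares K) (nonzeroSquares K) := by
  intro a ha b
  simp only [mem_nonzeroSquares, smul_eq_mul, map_mul] at ha ⊢
  rw [ha, one_mul]

theorem two_mul_ite_mem_nonzeroSquares (a : K) :
    2 * (if a ∈ nonzeroSquares K then 1 else 0 : ℤ) =
      quadraticChar K a ^ 2 + quadraticChar K a := by
  simp only [mem_nonzeroSquares]
  rcases eq_or_ne a 0 with rfl | ha
  · simp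
  · rcases quadraticChar_dichotomy ha with h | h <;> simp [h]

theorem sum_quadraticChar_sq : ∑ a : K, quadraticChar K a ^ 2 = (Fintype.card K : ℤ) - 1 := by
  rw [← sum_erase univ (a := (0 : K)) (by simp),
    sum_congr rfl fun a ha => quadraticChar_sq_one (ne_of_mem_erase ha), sum_const, nsmul_one,
    card_univ_erase_zero]

theorem two_mul_card_nonzeroSquares (h : ringChar K ≠ 2) :
    2 * (#(nonzeroSquares K) : ℤ) = Fintype.card K - 1 := by
  have hcard : (#(nonzeroSquares K) : ℤ) = ∑ a : K, if a ∈ nonzeroSquares K then 1 else 0 := by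
    simp
  rw [hcard, mul_sum, sum_congr rfl fun a _ => two_mul_ite_mem_nonzeroSquares a, sum_add_distrib,
    quadraticChar_sum_zero h, sum_quadraticChar_sq, add_zero]

theorem quadraticChar_neg_one_of_card_mod_four (h : Fintype.card K % 4 = 3) :
    quadraticChar K (-1) = -1 := by
  rw [quadraticChar_neg_one_iff_not_isSquare, FiniteField.isSquare_neg_one_iff]
  simpa using h

theorem two_mul_diffCount_nonzeroSquares (h : Fintype.card K % 4 = 3) {s : K} (hs : s ≠ 0) :
    2 * (diffCount (nonzeroSquares K) s : ℤ) = #(nonzeroSquares K) - 1 := by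
  have hpm (t : K) (ht : t ≠ 0) : t ∈ nonzeroSquares K ∨ -t ∈ nonzeroSquares K := by
    rw [neg_eq_neg_one_mul, mem_nonzeroSquares, mem_nonzeroSquares, map_mul,
      quadraticChar_neg_one_of_card_mod_four h]
    rcases quadraticChar_dichotomy ht with ht | ht <;> simp [ht]
  have hcount := card_sub_one_mul_diffCount smulStable_nonzeroSquares
    zero_notMem_nonzeroSquares hpm hs
  have hcard := two_mul_card_nonzeroSquares (ringChar_ne_two_of_card_mod_four h)
  have hpos : (#(nonzeroSquares K) : ℤ) ≠ 0 := by
    have := Fintype.card_pos (α := K)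
    omega
  apply mul_left_cancel₀ hpos
  linear_combination hcount + (diffCount (nonzeroSquares K) s : ℤ) * hcard

theorem smulStable_erase_zero : SMulStable (univ.erase (0 : K)) (univ.erase (0 : K)) := by
  intro a ha b
  simp [ne_of_mem_erase ha]

theorem diffCount_erase_zero {s : K} (hs : s ≠ 0) :
    (diffCount (univ.erase (0 : K)) s : ℤ) = Fintype.card K - 2 := by
  have hcount := card_sub_one_mul_diffCount smulStable_erase_zero (notMem_erase 0 univ)
    (fun t ht => .inl (by simp [ht])) hs
  rw [card_univ_erase_zero] at hcount
  have hpos : (Fintype.card K : ℤ) - 1 ≠ 0 := by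
    have := Fintype.one_lt_card (α := K)
    omega
  apply mul_left_cancel₀ hpos
  linear_combination hcount

theorem quadraticChar_div {b : K} (hb : b ≠ 0) (a : K) :
    quadraticChar K (a / b) = quadraticChar K a * quadraticChar K b := by
  have h : quadraticChar K (a / b) * quadraticChar K b = quadraticChar K a := by
    rw [← map_mul, div_mul_cancel₀ a hb]
  rw [← h, mul_assoc, ← sq, quadraticChar_sq_one hb, mul_one]

end Squares

section Counting

variable {K V : Type*} [Field K] [AddCommGroup V] [Module K V] [DecidableEq K]
  {ω : LinearMap.BilinForm K V}

theorem IsRayUnion.sum_mul_sum_filter_ne_zero {Γ : Finset K} {S : Finset V}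
    (hS : IsRayUnion Γ S) (hV : Module.finrank K V = 2) (hω : ω.IsAlt) (hnd : ω.Nondegenerate)
    {f : V → ℤ} (hf : ∀ t ∈ Γ, ∀ u, f (t • u) = f u) :
    ∑ u ∈ S, ∑ v ∈ S with ω u v ≠ 0, f u * f v =
      (∑ u ∈ S, f u) ^ 2 - #Γ * ∑ u ∈ S, f u ^ 2 := by
  have hdep : ∀ u ∈ S, ∑ v ∈ S with ω u v = 0, f u * f v = #Γ * f u ^ 2 := by
    intro u hu
    have hconst : ∀ v ∈ S.filter (ω u · = 0), f u * f v = f u ^ 2 := by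
      intro v hv
      obtain ⟨hv, huv⟩ := mem_filter.1 hv
      obtain ⟨t, rfl⟩ := exists_eq_smul_of_isAlt hV hω hnd
        (ne_of_mem_of_not_mem hu hS.zero_notMem) huv
      rw [hf t (hS.mem_of_smul_mem u hu t hv), sq]
    rw [sum_congr rfl hconst, sum_const, hS.card_filter_eq_zero hV hω hnd hu, nsmul_eq_mul]
  rw [mul_sum, ← sum_congr rfl hdep, sq, sum_mul_sum, ← sum_sub_distrib]
  refine sum_congr rfl fun u _ => ?_
  rw [← sum_filter_add_sum_filter_not S (fun v => ω u v = 0), add_sub_cancel_left]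

variable [Fintype K]

/-- The sum over `S` of the quadratic character of `ω g`. Its square is the non-constant part of the
difference counts of a union of rays of squares. -/
def quadraticCharSum (ω : LinearMap.BilinForm K V) (S : Finset V) (g : V) : ℤ :=
  ∑ u ∈ S, quadraticChar K (ω g u)

theorem sum_quadraticChar_sq_apply (S : Finset V) (g : V) :
    ∑ u ∈ S, quadraticChar K (ω g u) ^ 2 = #{u ∈ S | ω g u ≠ 0} := by
  rw [← sum_boole]
  refine sum_congr rfl fun u _ => ?_
  by_cases h : ω g u = 0
  · simp [h]
  · rw [if_pos h, quadraticChar_sq_one h]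

theorem four_mul_ite_mem_nonzeroSquares {a b d : K} (hd : d ≠ 0) :
    4 * (if a / d ∈ nonzeroSquares K ∧ b / d ∈ nonzeroSquares K then 1 else 0 : ℤ) =
      quadraticChar K a ^ 2 * quadraticChar K b ^ 2 + quadraticChar K a * quadraticChar K b +
      (quadraticChar K a ^ 2 * quadraticChar K b + quadraticChar K a * quadraticChar K b ^ 2) *
        quadraticChar K d := by
  have ha := two_mul_ite_mem_nonzeroSquares (a / d)
  have hb := two_mul_ite_mem_nonzeroSquares (b / d)
  have hd2 := quadraticChar_sq_one hd
  rw [quadraticChar_div hd] at ha hb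
  calc _ = (2 * if a / d ∈ nonzeroSquares K then 1 else 0 : ℤ) *
        (2 * if b / d ∈ nonzeroSquares K then 1 else 0) := by
        rw [mul_mul_mul_comm, ite_zero_mul_ite_zero, mul_one]
        norm_num
    _ = _ := by
        rw [ha, hb]
        linear_combination (quadraticChar K a ^ 2 * quadraticChar K b ^ 2 *
          (quadraticChar K d ^ 2 + 1) + quadraticChar K a ^ 2 * quadraticChar K b *
          quadraticChar K d + quadraticChar K a * quadraticChar K b ^ 2 * quadraticChar K d +
          quadraticChar K a * quadraticChar K b) * hd2

theorem sum_sum_mul_quadraticChar_eq_zero (h : Fintype.card K % 4 = 3) (hω : ω.IsAlt)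
    (S : Finset V) {φ : V → V → ℤ} (hφ : ∀ u v, φ u v = φ v u) :
    ∑ u ∈ S, ∑ v ∈ S with ω u v ≠ 0, φ u v * quadraticChar K (ω u v) = 0 := by
  have hanti (u v : V) : quadraticChar K (ω v u) = -quadraticChar K (ω u v) := by
    rw [← hω.neg_eq u v, neg_eq_neg_one_mul, map_mul, quadraticChar_neg_one_of_card_mod_four h,
      neg_one_mul]
  have hdrop : ∀ u ∈ S, ∑ v ∈ S with ω u v ≠ 0, φ u v * quadraticChar K (ω u v) =
      ∑ v ∈ S, φ u v * quadraticChar K (ω u v) := fun u _ =>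
    sum_filter_of_ne fun v _ hne h0 => hne (by rw [h0, quadraticChar_zero, mul_zero])
  rw [sum_congr rfl hdrop, ← self_eq_neg]
  conv_lhs => rw [sum_comm]
  simp only [← sum_neg_distrib]
  refine sum_congr rfl fun u _ => sum_congr rfl fun v _ => ?_
  rw [hφ v u, hanti u v, mul_neg]

theorem quadraticChar_sq_sq (a : K) : (quadraticChar K a ^ 2) ^ 2 = quadraticChar K a ^ 2 := by
  rcases eq_or_ne a 0 with rfl | ha
  · rw [quadraticChar_zero, zero_pow two_ne_zero, zero_pow two_ne_zero]
  · rw [quadraticChar_sq_one ha, one_pow]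

theorem IsRayUnion.four_mul_sum_ite_mem_nonzeroSquares {S : Finset V}
    (hS : IsRayUnion (nonzeroSquares K) S) (h : Fintype.card K % 4 = 3)
    (hV : Module.finrank K V = 2) (hω : ω.IsAlt) (hnd : ω.Nondegenerate) (g : V) :
    4 * ∑ u ∈ S, ∑ v ∈ S with ω u v ≠ 0,
        (if ω g v / ω u v ∈ nonzeroSquares K ∧ ω g u / ω u v ∈ nonzeroSquares K
          then 1 else 0 : ℤ) =
      (#{u ∈ S | ω g u ≠ 0} : ℤ) ^ 2 - 2 * #(nonzeroSquares K) * #{u ∈ S | ω g u ≠ 0} +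
        quadraticCharSum ω S g ^ 2 := by
  set χ : V → ℤ := fun u => quadraticChar K (ω g u) with hχ
  have hχ_smul : ∀ t ∈ nonzeroSquares K, ∀ u, χ (t • u) = χ u := fun t ht u => by
    simp only [hχ, map_smul, smul_eq_mul, map_mul, mem_nonzeroSquares.1 ht, one_mul]
  have hχ_sq : ∑ u ∈ S, χ u ^ 2 = #{u ∈ S | ω g u ≠ 0} := sum_quadraticChar_sq_apply S g
  have hχ_sq_sq : ∑ u ∈ S, (χ u ^ 2) ^ 2 = #{u ∈ S | ω g u ≠ 0} := by
    rw [← hχ_sq, sum_congr rfl fun u _ => quadraticChar_sq_sq _]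
  have hpair : ∀ u ∈ S, ∀ v ∈ S.filter (ω u · ≠ 0),
      4 * (if ω g v / ω u v ∈ nonzeroSquares K ∧ ω g u / ω u v ∈ nonzeroSquares K
        then 1 else 0 : ℤ) = χ u ^ 2 * χ v ^ 2 + χ u * χ v +
          (χ u ^ 2 * χ v + χ u * χ v ^ 2) * quadraticChar K (ω u v) := fun u _ v hv => by
    rw [four_mul_ite_mem_nonzeroSquares (mem_filter.1 hv).2]
    ring
  simp only [mul_sum]
  rw [sum_congr rfl fun u hu => sum_congr rfl (hpair u hu)]
  simp only [sum_add_distrib]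
  rw [hS.sum_mul_sum_filter_ne_zero hV hω hnd hχ_smul,
    hS.sum_mul_sum_filter_ne_zero hV hω hnd (f := fun u => χ u ^ 2)
      (fun t ht u => by rw [hχ_smul t ht]),
    sum_sum_mul_quadraticChar_eq_zero h hω S (by intros; ring), hχ_sq, hχ_sq_sq]
  simp only [quadraticCharSum, hχ]
  ring

variable [DecidableEq V]

theorem IsRayUnion.diffCount_of_erase_zero {S : Finset V} (hS : IsRayUnion (univ.erase (0 : K)) S)
    (hV : Module.finrank K V = 2) (hω : ω.IsAlt) (hnd : ω.Nondegenerate) {g : V} (hg : g ≠ 0) :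
    ((Fintype.card K : ℤ) - 1) ^ 2 * diffCount S g =
      (#{u ∈ S | ω g u ≠ 0} : ℤ) ^ 2 - (Fintype.card K - 1) * #{u ∈ S | ω g u ≠ 0} +
        (Fintype.card K - 1) * (Fintype.card K - 2) * #{u ∈ S | ω g u = 0} := by
  have hν : ∀ s ≠ 0, diffCount (univ.erase (0 : K)) s = diffCount (univ.erase (0 : K)) 1 :=
    fun s hs => by
      exact_mod_cast (diffCount_erase_zero hs).trans (diffCount_erase_zero one_ne_zero).symm
  set f : V → ℤ := fun u => if ω g u ≠ 0 then 1 else 0 with hf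
  have hpairs := hS.sum_mul_sum_filter_ne_zero hV hω hnd (f := f) fun t ht u => by
    simp [hf, ne_of_mem_erase ht]
  have hcount := congrArg (Nat.cast (R := ℤ))
    (hS.card_sq_mul_diffCount hV hω hnd (notMem_erase 0 univ) smulStable_erase_zero hν hg)
  have hsum : ∑ u ∈ S, f u = #{u ∈ S | ω g u ≠ 0} := sum_boole _ _
  have hsum_sq : ∑ u ∈ S, f u ^ 2 = #{u ∈ S | ω g u ≠ 0} := by
    rw [← hsum]
    exact sum_congr rfl fun u _ => by simp only [hf]; split_ifs <;> rfl
  have hind : ∀ u ∈ S, ∀ v ∈ S.filter (ω u · ≠ 0),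
      (if ω g v / ω u v ∈ univ.erase 0 ∧ ω g u / ω u v ∈ univ.erase 0 then 1 else 0 : ℤ) =
        f u * f v := by
    intro u _ v hv
    simp only [hf, mem_erase, mem_univ, true_and, ne_eq, div_eq_zero_iff, (mem_filter.1 hv).2,
      or_false, ite_zero_mul_ite_zero, mul_one, and_comm]
  push_cast at hcount
  rw [sum_congr rfl fun u hu => sum_congr rfl (hind u hu), hpairs, hsum, hsum_sq,
    card_univ_erase_zero, diffCount_erase_zero one_ne_zero] at hcount
  exact hcount

theorem IsRayUnion.diffCount_of_nonzeroSquares {S : Finset V}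
    (hS : IsRayUnion (nonzeroSquares K) S) (h : Fintype.card K % 4 = 3)
    (hV : Module.finrank K V = 2) (hω : ω.IsAlt) (hnd : ω.Nondegenerate) {g : V} (hg : g ≠ 0) :
    4 * (#(nonzeroSquares K) : ℤ) ^ 2 * diffCount S g =
      (#{u ∈ S | ω g u ≠ 0} : ℤ) ^ 2 - 2 * #(nonzeroSquares K) * #{u ∈ S | ω g u ≠ 0} +
        quadraticCharSum ω S g ^ 2 +
        2 * #(nonzeroSquares K) * (#(nonzeroSquares K) - 1) * #{u ∈ S | ω g u = 0} := by
  have hν1 := two_mul_diffCount_nonzeroSquares h (one_ne_zero (α := K))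
  have hν : ∀ s ≠ 0, diffCount (nonzeroSquares K) s = diffCount (nonzeroSquares K) 1 :=
    fun s hs => by
      have := two_mul_diffCount_nonzeroSquares h hs
      omega
  have hcount := congrArg (Nat.cast (R := ℤ)) (hS.card_sq_mul_diffCount hV hω hnd
    zero_notMem_nonzeroSquares smulStable_nonzeroSquares hν hg)
  have hpairs := hS.four_mul_sum_ite_mem_nonzeroSquares h hV hω hnd g
  push_cast at hcount
  linear_combination 4 * hcount + hpairs +
    2 * #(nonzeroSquares K) * #{u ∈ S | ω g u = 0} * hν1

end Counting

section FrobeniusForm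

variable (K : Type*) {F : Type*} [Field K] [Fintype K] [Field F] [Algebra K F]

/-- The bilinear form `(x, y) ↦ Tr (ε * x ^ |K| * y)` on `F` over `K`. It is alternating when `F`
is a quadratic extension and `ε ^ |K| = -ε`. -/
noncomputable def frobeniusForm (ε : F) : LinearMap.BilinForm K F :=
  (Algebra.traceForm K F).compLeft
    (LinearMap.mulLeft K ε ∘ₗ (FiniteField.frobeniusAlgHom K F).toLinearMap)

variable {K} [Finite F] {ε : F}

theorem frobeniusForm_nondegenerate (hε : ε ≠ 0) : (frobeniusForm K ε).Nondegenerate := by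
  have hsurj := (FiniteField.frobeniusAlgEquivOfAlgebraic K F).surjective
  refine ⟨fun x hx => ?_, fun y hy => (traceForm_nondegenerate K F).2 y fun z => ?_⟩
  · have : ε * x ^ Fintype.card K = 0 := (traceForm_nondegenerate K F).1 _ hx
    simpa [hε] using this
  · obtain ⟨x, hx⟩ := hsurj (ε⁻¹ * z)
    rw [FiniteField.coe_frobeniusAlgEquivOfAlgebraic] at hx
    have := hy x
    simpa [frobeniusForm, hx, hε] using this

theorem pow_card_pow_card_of_finrank_eq_two (hF : Module.finrank K F = 2) (x : F) :
    (x ^ Fintype.card K) ^ Fintype.card K = x := by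
  let := Fintype.ofFinite F
  rw [← pow_mul, ← sq, ← hF, ← Module.card_eq_pow_finrank, FiniteField.pow_card]

theorem algebraMap_frobeniusForm (hF : Module.finrank K F = 2) (hε : ε ^ Fintype.card K = -ε)
    (x y : F) : algebraMap K F (frobeniusForm K ε x y) =
      ε * (x ^ Fintype.card K * y - x * y ^ Fintype.card K) := by
  have htrace : frobeniusForm K ε x y = Algebra.trace K F (ε * x ^ Fintype.card K * y) := rfl
  rw [htrace, FiniteField.algebraMap_trace_eq_sum_pow, hF, sum_range_succ, sum_range_one,
    Nat.card_eq_fintype_card, pow_zero, pow_one, pow_one, mul_pow, mul_pow,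
    pow_card_pow_card_of_finrank_eq_two hF, hε]
  ring

theorem frobeniusForm_isAlt (hF : Module.finrank K F = 2) (hε : ε ^ Fintype.card K = -ε) :
    (frobeniusForm K ε).IsAlt := by
  intro x
  apply (algebraMap K F).injective
  rw [algebraMap_frobeniusForm hF hε, map_zero]
  ring

theorem algebraMap_norm_of_finrank_eq_two (hF : Module.finrank K F = 2) (x : F) :
    algebraMap K F (Algebra.norm K x) = x ^ (Fintype.card K + 1) := by
  rw [FiniteField.algebraMap_norm_eq_pow_sum, hF, sum_range_succ, sum_range_one,
    Nat.card_eq_fintype_card, pow_zero, pow_one, add_comm]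

theorem frobeniusForm_mul_mul (hF : Module.finrank K F = 2) (hε : ε ^ Fintype.card K = -ε)
    (c x y : F) :
    frobeniusForm K ε (c * x) (c * y) = Algebra.norm K c * frobeniusForm K ε x y := by
  apply (algebraMap K F).injective
  rw [(algebraMap K F).map_mul, algebraMap_frobeniusForm hF hε, algebraMap_frobeniusForm hF hε,
    algebraMap_norm_of_finrank_eq_two hF]
  ring

theorem frobeniusForm_pow_card_neg_pow_card (hF : Module.finrank K F = 2)
    (hε : ε ^ Fintype.card K = -ε) (x y : F) :
    frobeniusForm K ε (x ^ Fintype.card K) (-y ^ Fintype.card K) = frobeniusForm K ε x y := by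
  apply (algebraMap K F).injective
  rw [map_neg, map_neg, algebraMap_frobeniusForm hF hε, algebraMap_frobeniusForm hF hε,
    pow_card_pow_card_of_finrank_eq_two hF, pow_card_pow_card_of_finrank_eq_two hF]
  ring

end FrobeniusForm

section PrimitiveElt

variable {F : Type*} [Field F] [Fintype F] {α : F}

theorem IsPrimitiveElt.orderOf_eq (hα : IsPrimitiveElt α) (hα0 : α ≠ 0) :
    orderOf α = Fintype.card F - 1 := by
  classical
  rw [← Units.val_mk0 hα0, orderOf_units, orderOf_eq_card_of_forall_mem_powers,
    Nat.card_eq_fintype_card, Fintype.card_units]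
  intro x
  obtain ⟨n, hn⟩ := hα x x.ne_zero
  exact ⟨n, Units.ext (by simpa using hn)⟩

theorem IsPrimitiveElt.pow_eq_pow_iff (hα : IsPrimitiveElt α) (hα0 : α ≠ 0) {i j : ℕ} :
    α ^ i = α ^ j ↔ i ≡ j [MOD Fintype.card F - 1] := by
  rw [← hα.orderOf_eq hα0, ← Units.val_mk0 hα0, ← Units.val_pow_eq_pow_val,
    ← Units.val_pow_eq_pow_val, Units.val_inj, pow_eq_pow_iff_modEq, orderOf_units]

theorem IsPrimitiveElt.ne_zero (hα : IsPrimitiveElt α) (h : 2 < Fintype.card F) : α ≠ 0 := by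
  classical
  rintro rfl
  have hsub : (univ : Finset F) ⊆ {0, 1} := fun x _ => by
    rw [mem_insert, mem_singleton]
    refine or_iff_not_imp_left.2 fun hx => ?_
    obtain ⟨n, rfl⟩ := hα x hx
    rw [pow_eq_zero_iff', not_and_not_right] at hx
    rw [hx rfl, pow_zero]
  exact h.not_ge ((card_le_card hsub).trans card_le_two)

theorem IsPrimitiveElt.pow_eq_neg_one (hα : IsPrimitiveElt α) (hα0 : α ≠ 0) {m : ℕ}
    (hm : Fintype.card F - 1 = 2 * m) : α ^ m = -1 := by
  have hcard := Fintype.one_lt_card (α := F)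
  refine (sq_eq_one_iff.1 ?_).resolve_left fun h1 => ?_
  · rw [← pow_mul, mul_comm, ← hm, ← hα.orderOf_eq hα0, pow_orderOf_eq_one]
  · have := Nat.le_of_dvd (by omega) (orderOf_dvd_of_pow_eq_one h1)
    rw [hα.orderOf_eq hα0] at this
    omega

variable [DecidableEq F]

theorem zero_notMem_cycClass (hα0 : α ≠ 0) (e i : ℕ) : 0 ∉ cycClass α e i := by
  simp [cycClass, hα0]

theorem IsPrimitiveElt.pow_mem_cycClass_iff (hα : IsPrimitiveElt α) (hα0 : α ≠ 0) {e : ℕ}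
    (he : e ∣ Fintype.card F - 1) {n i : ℕ} : α ^ n ∈ cycClass α e i ↔ n ≡ i [MOD e] := by
  simp only [cycClass, mem_image, mem_range, hα.pow_eq_pow_iff hα0]
  constructor
  · rintro ⟨j, -, hj⟩
    refine (hj.of_dvd he).symm.trans ?_
    simp [Nat.ModEq]
  · intro hn
    set N := Fintype.card F - 1
    have hcard := Fintype.one_lt_card (α := F)
    have hi : i ≤ n + N * i := (Nat.le_mul_of_pos_left i (by omega)).trans (Nat.le_add_left _ _)
    have hmod : i ≡ n + N * i [MOD e] :=
      hn.symm.trans (Nat.ModEq.symm (by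
        simpa using (Nat.modEq_zero_iff_dvd.2 (he.mul_right i)).add_left n))
    obtain ⟨j, hj⟩ := (Nat.modEq_iff_dvd' hi).1 hmod
    refine ⟨j % N, (Nat.mod_lt _ (by omega)).trans (by omega), ?_⟩
    calc e * (j % N) + i ≡ e * j + i [MOD N] := ((Nat.mod_modEq j N).mul_left e).add_right i
      _ = n + N * i := by omega
      _ ≡ n [MOD N] := by simp [Nat.ModEq]

theorem IsPrimitiveElt.sum_erase_zero {A : Type*} [AddCommMonoid A] (hα : IsPrimitiveElt α)
    (hα0 : α ≠ 0) (φ : F → A) :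
    ∑ x ∈ univ.erase 0, φ x = ∑ n ∈ range (Fintype.card F - 1), φ (α ^ n) := by
  symm
  refine sum_nbij (α ^ ·) (by simp [hα0]) ?_ ?_ (fun _ _ => rfl)
  · intro i hi j hj h
    exact ((hα.pow_eq_pow_iff hα0).1 h).eq_of_lt_of_lt (mem_range.1 hi) (mem_range.1 hj)
  · intro x hx
    obtain ⟨n, rfl⟩ := hα x (by simpa using hx)
    have hcard := Fintype.one_lt_card (α := F)
    exact ⟨n % (Fintype.card F - 1), by simpa using Nat.mod_lt _ (by omega),
      (hα.pow_eq_pow_iff hα0).2 (Nat.mod_modEq _ _)⟩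

theorem sum_range_mul_of_periodic {A : Type*} [AddCommMonoid A] {e : ℕ} {φ : ℕ → A}
    (hφ : Function.Periodic φ e) (f : ℕ) :
    ∑ n ∈ range (f * e), φ n = f • ∑ n ∈ range e, φ n := by
  induction f with
  | zero => simp
  | succ f ih =>
    rw [Nat.succ_mul, sum_range_add, ih, succ_nsmul]
    congr 1
    exact sum_congr rfl fun n _ => by rw [add_comm, ← smul_eq_mul, hφ.nsmul]

theorem IsPrimitiveElt.sum_erase_zero_of_periodic {A : Type*} [AddCommMonoid A]
    (hα : IsPrimitiveElt α) (hα0 : α ≠ 0) {φ : F → A} {e f : ℕ} (hef : Fintype.card F - 1 = f * e)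
    (hφ : ∀ n, φ (α ^ (n + e)) = φ (α ^ n)) :
    ∑ x ∈ univ.erase 0, φ x = f • ∑ n ∈ range e, φ (α ^ n) := by
  rw [hα.sum_erase_zero hα0, hef, sum_range_mul_of_periodic (φ := fun n => φ (α ^ n)) hφ]

theorem IsPrimitiveElt.sum_of_periodic {A : Type*} [AddCommMonoid A] (hα : IsPrimitiveElt α)
    (hα0 : α ≠ 0) {S : Finset F} (h0 : 0 ∉ S) {e f : ℕ} (hef : Fintype.card F - 1 = f * e)
    (hS : ∀ n, α ^ (n + e) ∈ S ↔ α ^ n ∈ S) {φ : F → A}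
    (hφ : ∀ n, φ (α ^ (n + e)) = φ (α ^ n)) :
    ∑ x ∈ S, φ x = f • ∑ n ∈ range e with α ^ n ∈ S, φ (α ^ n) := by
  have hsub : S ⊆ univ.erase 0 := subset_erase.2 ⟨subset_univ S, h0⟩
  rw [sum_filter, ← hα.sum_erase_zero_of_periodic hα0 (φ := fun x => if x ∈ S then φ x else 0)
    hef (fun n => by simp only [hS, hφ]), ← sum_filter, filter_mem_eq_inter,
    inter_eq_right.2 hsub]

theorem IsPrimitiveElt.card_of_periodic (hα : IsPrimitiveElt α) (hα0 : α ≠ 0) {S : Finset F}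
    (h0 : 0 ∉ S) {e f : ℕ} (hef : Fintype.card F - 1 = f * e)
    (hS : ∀ n, α ^ (n + e) ∈ S ↔ α ^ n ∈ S) : #S = f * #{n ∈ range e | α ^ n ∈ S} := by
  rw [card_eq_sum_ones, hα.sum_of_periodic hα0 h0 hef hS fun _ => rfl, card_eq_sum_ones,
    smul_eq_mul]

end PrimitiveElt

section Plane

variable {K V : Type*} [Field K] [AddCommGroup V] [Module K V] {ω : LinearMap.BilinForm K V}
  [DecidableEq K] {Γ : Finset K} {S : Finset V}

theorem IsRayUnion.card_filter_eq_zero_of_smul_mem (hS : IsRayUnion Γ S)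
    (hV : Module.finrank K V = 2) (hω : ω.IsAlt) (hnd : ω.Nondegenerate) {t : K} {g : V}
    (ht : t • g ∈ S) : #{u ∈ S | ω g u = 0} = #Γ := by
  have ht0 : t ≠ 0 := by
    rintro rfl
    exact hS.zero_notMem (zero_smul K g ▸ ht)
  simpa [ht0] using hS.card_filter_eq_zero hV hω hnd ht

theorem card_filter_eq_zero_of_forall_smul_notMem (hV : Module.finrank K V = 2) (hω : ω.IsAlt)
    (hnd : ω.Nondegenerate) {g : V} (hg : g ≠ 0) (h : ∀ t : K, t • g ∉ S) :
    #{u ∈ S | ω g u = 0} = 0 := by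
  refine card_eq_zero.2 (filter_false_of_mem fun u hu hgu => ?_)
  obtain ⟨t, rfl⟩ := exists_eq_smul_of_isAlt hV hω hnd hg hgu
  exact h t hu

theorem quadraticCharSum_smul [Fintype K] (t : K) (g : V) :
    quadraticCharSum ω S (t • g) = quadraticChar K t * quadraticCharSum ω S g := by
  simp only [quadraticCharSum, map_smul, LinearMap.smul_apply, smul_eq_mul, map_mul, mul_sum]

end Plane

section QuadraticExtension

variable {K F : Type*} [Field K] [Field F] [Finite F] [Algebra K F]

theorem IsPrimitiveElt.exists_norm_pow_eq {α : F} (hα : IsPrimitiveElt α) {t : K}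
    (ht : t ≠ 0) : ∃ j : ℕ, Algebra.norm K α ^ j = t := by
  obtain ⟨x, rfl⟩ := FiniteField.norm_surjective K F t
  obtain ⟨j, rfl⟩ := hα x (by rintro rfl; exact ht Algebra.norm_zero)
  exact ⟨j, (map_pow _ _ _).symm⟩

variable [Fintype K]

section CharSum

variable [DecidableEq K] {ε : F} {S : Finset F}

theorem quadraticCharSum_mul (hF : Module.finrank K F = 2) (hε : ε ^ Fintype.card K = -ε) {c : F}
    (hc : quadraticChar K (Algebra.norm K c) = 1) (hcS : ∀ u, c * u ∈ S ↔ u ∈ S) (g : F) :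
    quadraticCharSum (frobeniusForm K ε) S (c * g) =
      quadraticCharSum (frobeniusForm K ε) S g := by
  have hc0 : c ≠ 0 := by
    rintro rfl
    simp [Algebra.norm_zero] at hc
  symm
  refine sum_nbij' (c * ·) (c⁻¹ * ·) (fun u hu => (hcS u).2 hu)
    (fun u hu => (hcS _).1 (by rwa [mul_inv_cancel_left₀ hc0]))
    (fun u _ => inv_mul_cancel_left₀ hc0 u) (fun u _ => mul_inv_cancel_left₀ hc0 u) fun u _ => ?_
  rw [frobeniusForm_mul_mul hF hε, map_mul, hc, one_mul]

theorem quadraticCharSum_pow_card (hF : Module.finrank K F = 2) (hε : ε ^ Fintype.card K = -ε)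
    (hS : ∀ u ∈ S, -u ^ Fintype.card K ∈ S) (g : F) :
    quadraticCharSum (frobeniusForm K ε) S (g ^ Fintype.card K) =
      quadraticCharSum (frobeniusForm K ε) S g := by
  have hinv (u : F) : -(-u ^ Fintype.card K) ^ Fintype.card K = u := by
    have := map_neg (FiniteField.frobeniusAlgHom K F) (u ^ Fintype.card K)
    simp only [FiniteField.coe_frobeniusAlgHom] at this
    rw [this, neg_neg, pow_card_pow_card_of_finrank_eq_two hF]
  symm
  refine sum_nbij' (fun u => -u ^ Fintype.card K) (fun u => -u ^ Fintype.card K) hS hS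
    (fun u _ => hinv u) (fun u _ => hinv u) fun u _ => ?_
  rw [frobeniusForm_pow_card_neg_pow_card hF hε]

end CharSum

section Norm

variable {α : F}

theorem norm_pow_smul_pow (hF : Module.finrank K F = 2) (α : F) (j n : ℕ) :
    Algebra.norm K α ^ j • α ^ n = α ^ (n + (Fintype.card K + 1) * j) := by
  rw [Algebra.smul_def, map_pow, algebraMap_norm_of_finrank_eq_two hF]
  ring

theorem IsPrimitiveElt.isRayUnion (hα : IsPrimitiveElt α) (hF : Module.finrank K F = 2)
    {Γ : Finset K} {S : Finset F} (h0Γ : (0 : K) ∉ Γ) (h0S : (0 : F) ∉ S)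
    (hstable : ∀ j, Algebra.norm K α ^ j ∈ Γ → ∀ n,
      α ^ (n + (Fintype.card K + 1) * j) ∈ S ↔ α ^ n ∈ S)
    (hray : ∀ n, α ^ n ∈ S → ∀ j, α ^ (n + (Fintype.card K + 1) * j) ∈ S →
      Algebra.norm K α ^ j ∈ Γ) :
    IsRayUnion Γ S where
  zero_notMem := h0S
  stable a ha u := by
    obtain ⟨j, rfl⟩ := hα.exists_norm_pow_eq (ne_of_mem_of_not_mem ha h0Γ)
    rcases eq_or_ne u 0 with rfl | hu
    · rw [smul_zero]
    · obtain ⟨n, rfl⟩ := hα u hu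
      rw [norm_pow_smul_pow hF, hstable j ha n]
  mem_of_smul_mem u hu t ht := by
    obtain ⟨n, rfl⟩ := hα u (ne_of_mem_of_not_mem hu h0S)
    have ht0 : t ≠ 0 := by
      rintro rfl
      exact h0S (by rwa [zero_smul] at ht)
    obtain ⟨j, rfl⟩ := hα.exists_norm_pow_eq ht0
    exact hray n hu j (by rwa [norm_pow_smul_pow hF] at ht)

variable [DecidableEq K]

theorem IsPrimitiveElt.quadraticChar_norm (hα : IsPrimitiveElt α) (h : ringChar K ≠ 2) :
    quadraticChar K (Algebra.norm K α) = -1 := by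
  obtain ⟨a, ha⟩ := quadraticChar_exists_neg_one h
  obtain ⟨j, rfl⟩ := hα.exists_norm_pow_eq (K := K) (t := a) (by rintro rfl; simp at ha)
  rw [map_pow] at ha
  refine (quadraticChar_dichotomy fun h0 => ?_).resolve_left fun h1 => ?_
  · rw [h0, quadraticChar_zero] at ha
    rcases j with _ | j <;> simp at ha
  · simp [h1] at ha

theorem IsPrimitiveElt.norm_pow_mem_nonzeroSquares_iff (hα : IsPrimitiveElt α)
    (h : ringChar K ≠ 2) {j : ℕ} : Algebra.norm K α ^ j ∈ nonzeroSquares K ↔ Even j := by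
  rw [mem_nonzeroSquares, map_pow, hα.quadraticChar_norm h,
    neg_one_pow_eq_one_iff_even (by norm_num)]

end Norm

end QuadraticExtension

section SkewSet

variable {F : Type*} [Field F] [Fintype F] [DecidableEq F] {α : F}

/-- The union `C_3^8 ∪ C_5^8` of cyclotomic classes, the skew partial difference set. -/
def skewSet (α : F) : Finset F :=
  cycClass α 8 3 ∪ cycClass α 8 5

theorem zero_notMem_skewSet (hα0 : α ≠ 0) : 0 ∉ skewSet α := by
  simp [skewSet, zero_notMem_cycClass hα0]

theorem IsPrimitiveElt.pow_mem_skewSet_iff (hα : IsPrimitiveElt α) (hα0 : α ≠ 0)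
    (h8 : 8 ∣ Fintype.card F - 1) {n : ℕ} : α ^ n ∈ skewSet α ↔ n % 8 = 3 ∨ n % 8 = 5 := by
  rw [skewSet, mem_union, hα.pow_mem_cycClass_iff hα0 h8, hα.pow_mem_cycClass_iff hα0 h8]
  rfl

theorem IsPrimitiveElt.pow_mem_cycClass_four_zero_iff (hα : IsPrimitiveElt α) (hα0 : α ≠ 0)
    (h8 : 8 ∣ Fintype.card F - 1) {n : ℕ} : α ^ n ∈ cycClass α 4 0 ↔ n % 4 = 0 :=
  hα.pow_mem_cycClass_iff hα0 (dvd_trans (by norm_num) h8)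

theorem IsPrimitiveElt.filter_range_skewSet (hα : IsPrimitiveElt α) (hα0 : α ≠ 0)
    (h8 : 8 ∣ Fintype.card F - 1) : {n ∈ range 8 | α ^ n ∈ skewSet α} = {3, 5} := by
  simp only [hα.pow_mem_skewSet_iff hα0 h8]
  rfl

theorem IsPrimitiveElt.card_skewSet (hα : IsPrimitiveElt α) (hα0 : α ≠ 0) {f : ℕ}
    (hf : Fintype.card F - 1 = f * 8) : #(skewSet α) = 2 * f := by
  have h8 : 8 ∣ Fintype.card F - 1 := Dvd.intro_left f hf.symm
  rw [hα.card_of_periodic hα0 (zero_notMem_skewSet hα0) hf fun n => by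
    simp [hα.pow_mem_skewSet_iff hα0 h8], hα.filter_range_skewSet hα0 h8, card_pair (by norm_num),
    mul_comm]

theorem IsPrimitiveElt.card_cycClass_four_zero (hα : IsPrimitiveElt α) (hα0 : α ≠ 0) {f : ℕ}
    (hf : Fintype.card F - 1 = f * 8) : #(cycClass α 4 0) = 2 * f := by
  have h8 : 8 ∣ Fintype.card F - 1 := Dvd.intro_left f hf.symm
  have hrange : {n ∈ range 4 | α ^ n ∈ cycClass α 4 0} = {0} := by
    simp only [hα.pow_mem_cycClass_four_zero_iff hα0 h8]
    rfl
  rw [hα.card_of_periodic hα0 (zero_notMem_cycClass hα0 4 0) (e := 4) (f := 2 * f) (by omega)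
    fun n => by
    simp [hα.pow_mem_cycClass_four_zero_iff hα0 h8], hrange, card_singleton, mul_one]

theorem IsPrimitiveElt.pow_eight_mul_mem_skewSet_iff (hα : IsPrimitiveElt α) (hα0 : α ≠ 0)
    (h8 : 8 ∣ Fintype.card F - 1) (u : F) : α ^ 8 * u ∈ skewSet α ↔ u ∈ skewSet α := by
  rcases eq_or_ne u 0 with rfl | hu
  · rw [mul_zero]
  · obtain ⟨n, rfl⟩ := hα u hu
    rw [← pow_add, hα.pow_mem_skewSet_iff hα0 h8, hα.pow_mem_skewSet_iff hα0 h8, Nat.add_mod_left]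

theorem IsPrimitiveElt.sum_skewSet_pow_ne_zero (hα : IsPrimitiveElt α) (hα0 : α ≠ 0) {f : ℕ}
    (hf : Fintype.card F - 1 = f * 8) : ∑ u ∈ skewSet α, u ^ (3 * f) ≠ 0 := by
  have h8 : 8 ∣ Fintype.card F - 1 := Dvd.intro_left f hf.symm
  have hf0 : 0 < f := by have := Fintype.one_lt_card (α := F); omega
  have hone {n : ℕ} : α ^ n = 1 ↔ f * 8 ∣ n := by
    rw [← hf, ← hα.orderOf_eq hα0, orderOf_dvd_iff_pow_eq_one]
  have hfF : (f : F) ≠ 0 := by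
    intro h0
    have hcast := congrArg (Nat.cast (R := F)) hf
    rw [Nat.cast_pred Fintype.card_pos, Nat.cast_mul, h0, zero_mul, FiniteField.cast_card_eq_zero,
      zero_sub] at hcast
    exact neg_ne_zero.2 one_ne_zero hcast
  rw [hα.sum_of_periodic hα0 (zero_notMem_skewSet hα0) hf
    (fun n => by simp [hα.pow_mem_skewSet_iff hα0 h8])
    (fun n => by
      rw [pow_add, mul_pow, ← pow_mul α 8, (hone (n := 8 * (3 * f))).2 ⟨3, by ring⟩, mul_one]),
    hα.filter_range_skewSet hα0 h8, sum_pair (by norm_num), nsmul_eq_mul]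
  refine mul_ne_zero hfF fun hsum => ?_
  -- `α ^ f` is a primitive eighth root of unity, so its powers `9` and `15` are not opposite.
  have hopp : α ^ (6 * f) = -1 := by
    refine eq_neg_of_add_eq_zero_right (mul_left_cancel₀ (pow_ne_zero (9 * f) hα0) ?_)
    linear_combination hsum
  have hdvd : f * 8 ∣ 12 * f := hone.1 (by
    rw [show 12 * f = 6 * f * 2 by ring, pow_mul, hopp, neg_one_sq])
  have := (Nat.mul_dvd_mul_iff_right hf0).1 (mul_comm f 8 ▸ hdvd)
  omega

end SkewSet

theorem add_mul_mod_eight (k n j : ℕ) : (n + (8 * k + 3 + 1) * j) % 8 = (n + 4 * j) % 8 := by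
  rw [show n + (8 * k + 3 + 1) * j = n + 4 * j + 8 * (k * j) by ring, Nat.add_mul_mod_self_left]

section QuadraticSkewSet

variable {K F : Type*} [Field K] [Fintype K] [Field F] [Algebra K F] {α ε : F} {k : ℕ}

theorem card_sub_one_of_finrank_eq_two [Fintype F] (hF : Module.finrank K F = 2)
    (hK : Fintype.card K = 8 * k + 3) :
    Fintype.card F - 1 = (4 * k + 1) * (2 * k + 1) * 8 := by
  rw [Module.card_eq_pow_finrank (K := K), hF, hK]
  exact Nat.sub_eq_of_eq_add (by ring)

theorem eight_dvd_card_sub_one [Fintype F] (hF : Module.finrank K F = 2)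
    (hK : Fintype.card K = 8 * k + 3) : 8 ∣ Fintype.card F - 1 :=
  Dvd.intro_left _ (card_sub_one_of_finrank_eq_two hF hK).symm

theorem IsPrimitiveElt.ne_zero_of_finrank_eq_two [Finite F] (hα : IsPrimitiveElt α)
    (hF : Module.finrank K F = 2) (hK : Fintype.card K = 8 * k + 3) : α ≠ 0 := by
  let := Fintype.ofFinite F
  refine hα.ne_zero ?_
  rw [Module.card_eq_pow_finrank (K := K), hF, hK]
  nlinarith

theorem ringChar_ne_two_of_card_eq (hK : Fintype.card K = 8 * k + 3) : ringChar K ≠ 2 :=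
  ringChar_ne_two_of_card_mod_four (by omega)

theorem IsPrimitiveElt.pow_mul_eq_neg_one [Finite F] (hα : IsPrimitiveElt α)
    (hF : Module.finrank K F = 2) (hK : Fintype.card K = 8 * k + 3) :
    α ^ (4 * ((4 * k + 1) * (2 * k + 1))) = -1 :=
  let := Fintype.ofFinite F
  hα.pow_eq_neg_one (hα.ne_zero_of_finrank_eq_two hF hK)
    ((card_sub_one_of_finrank_eq_two hF hK).trans (by ring))

theorem IsPrimitiveElt.exists_pow_card_eq_neg [Finite F] (hα : IsPrimitiveElt α)
    (hF : Module.finrank K F = 2) (hK : Fintype.card K = 8 * k + 3) :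
    ∃ ε : F, ε ≠ 0 ∧ ε ^ Fintype.card K = -ε := by
  refine ⟨α ^ (2 * (2 * k + 1)), pow_ne_zero _ (hα.ne_zero_of_finrank_eq_two hF hK), ?_⟩
  calc (α ^ (2 * (2 * k + 1))) ^ Fintype.card K
      = α ^ (4 * ((4 * k + 1) * (2 * k + 1))) * α ^ (2 * (2 * k + 1)) := by rw [hK]; ring
    _ = -α ^ (2 * (2 * k + 1)) := by rw [hα.pow_mul_eq_neg_one hF hK, neg_one_mul]

variable [Fintype F] [DecidableEq F]

theorem IsPrimitiveElt.neg_pow_card_mem_skewSet (hα : IsPrimitiveElt α)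
    (hF : Module.finrank K F = 2) (hK : Fintype.card K = 8 * k + 3) {u : F} (hu : u ∈ skewSet α) :
    -u ^ Fintype.card K ∈ skewSet α := by
  have hα0 := hα.ne_zero_of_finrank_eq_two hF hK
  have h8 := eight_dvd_card_sub_one hF hK
  obtain ⟨i, rfl⟩ := hα u (ne_of_mem_of_not_mem hu (zero_notMem_skewSet hα0))
  have hexp : 4 * ((4 * k + 1) * (2 * k + 1)) + i * (8 * k + 3) =
      3 * i + 4 + 8 * (i * k + 4 * k ^ 2 + 3 * k) := by ring
  rw [hα.pow_mem_skewSet_iff hα0 h8] at hu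
  rw [← neg_one_mul, ← hα.pow_mul_eq_neg_one hF hK, hK, ← pow_mul, ← pow_add, hexp,
    hα.pow_mem_skewSet_iff hα0 h8, Nat.add_mul_mod_self_left]
  omega

section RayUnion

variable [DecidableEq K]

theorem card_nonzeroSquares_of_card_eq (hK : Fintype.card K = 8 * k + 3) :
    #(nonzeroSquares K) = 4 * k + 1 := by
  have := two_mul_card_nonzeroSquares (ringChar_ne_two_of_card_eq hK)
  omega

theorem IsPrimitiveElt.isRayUnion_skewSet (hα : IsPrimitiveElt α) (hF : Module.finrank K F = 2)
    (hK : Fintype.card K = 8 * k + 3) : IsRayUnion (nonzeroSquares K) (skewSet α) := by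
  have hα0 := hα.ne_zero_of_finrank_eq_two hF hK
  have h8 := eight_dvd_card_sub_one hF hK
  refine hα.isRayUnion hF zero_notMem_nonzeroSquares (zero_notMem_skewSet hα0) ?_ ?_ <;>
    simp only [hK, hα.pow_mem_skewSet_iff hα0 h8, add_mul_mod_eight, Nat.even_iff,
      hα.norm_pow_mem_nonzeroSquares_iff (ringChar_ne_two_of_card_eq hK)]
  · intro j hj n
    omega
  · intro n hn j hj
    omega

theorem IsPrimitiveElt.isRayUnion_cycClass_four_zero (hα : IsPrimitiveElt α)
    (hF : Module.finrank K F = 2) (hK : Fintype.card K = 8 * k + 3) :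
    IsRayUnion (univ.erase (0 : K)) (cycClass α 4 0) := by
  have hα0 := hα.ne_zero_of_finrank_eq_two hF hK
  have h8 := eight_dvd_card_sub_one hF hK
  refine hα.isRayUnion hF (notMem_erase 0 univ) (zero_notMem_cycClass hα0 4 0) ?_ ?_
  · intro j _ n
    have := add_mul_mod_eight k n j
    rw [hK, hα.pow_mem_cycClass_four_zero_iff hα0 h8, hα.pow_mem_cycClass_four_zero_iff hα0 h8]
    omega
  · intro _ _ j _
    refine mem_erase.2 ⟨pow_ne_zero j ?_, mem_univ _⟩
    rwa [Ne, Algebra.norm_eq_zero_iff]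

theorem IsPrimitiveElt.card_filter_skewSet_of_odd (hα : IsPrimitiveElt α)
    (hF : Module.finrank K F = 2) (hK : Fintype.card K = 8 * k + 3)
    (hε : ε ^ Fintype.card K = -ε) (hε0 : ε ≠ 0) {n : ℕ} (hn : n % 2 = 1) :
    #{u ∈ skewSet α | frobeniusForm K ε (α ^ n) u = 0} = 4 * k + 1 := by
  have hα0 := hα.ne_zero_of_finrank_eq_two hF hK
  obtain ⟨j, hj⟩ : ∃ j, Algebra.norm K α ^ j • α ^ n ∈ skewSet α := by
    simp only [norm_pow_smul_pow hF, hK, hα.pow_mem_skewSet_iff hα0 (eight_dvd_card_sub_one hF hK),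
      add_mul_mod_eight]
    by_cases h : n % 8 = 3 ∨ n % 8 = 5
    · exact ⟨0, h⟩
    · exact ⟨1, by omega⟩
  rw [(hα.isRayUnion_skewSet hF hK).card_filter_eq_zero_of_smul_mem hF (frobeniusForm_isAlt hF hε)
    (frobeniusForm_nondegenerate hε0) hj, card_nonzeroSquares_of_card_eq hK]

theorem IsPrimitiveElt.card_filter_skewSet_of_even (hα : IsPrimitiveElt α)
    (hF : Module.finrank K F = 2) (hK : Fintype.card K = 8 * k + 3)
    (hε : ε ^ Fintype.card K = -ε) (hε0 : ε ≠ 0) {n : ℕ} (hn : n % 2 = 0) :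
    #{u ∈ skewSet α | frobeniusForm K ε (α ^ n) u = 0} = 0 := by
  have hα0 := hα.ne_zero_of_finrank_eq_two hF hK
  refine card_filter_eq_zero_of_forall_smul_notMem hF (frobeniusForm_isAlt hF hε)
    (frobeniusForm_nondegenerate hε0) (pow_ne_zero n hα0) fun t ht => ?_
  have ht0 : t ≠ 0 := by
    rintro rfl
    exact zero_notMem_skewSet hα0 (by rwa [zero_smul] at ht)
  obtain ⟨j, rfl⟩ := hα.exists_norm_pow_eq ht0
  rw [norm_pow_smul_pow hF, hK, hα.pow_mem_skewSet_iff hα0 (eight_dvd_card_sub_one hF hK),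
    add_mul_mod_eight] at ht
  omega

theorem IsPrimitiveElt.card_filter_cycClass_four_zero (hα : IsPrimitiveElt α)
    (hF : Module.finrank K F = 2) (hK : Fintype.card K = 8 * k + 3)
    (hε : ε ^ Fintype.card K = -ε) (hε0 : ε ≠ 0) {g : F} (hg : g ≠ 0) :
    #{u ∈ cycClass α 4 0 | frobeniusForm K ε g u = 0} =
      if g ∈ cycClass α 4 0 then 8 * k + 2 else 0 := by
  have hS := hα.isRayUnion_cycClass_four_zero hF hK
  split_ifs with hgA
  · rw [hS.card_filter_eq_zero hF (frobeniusForm_isAlt hF hε) (frobeniusForm_nondegenerate hε0) hgA,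
      card_erase_of_mem (mem_univ _), card_univ, hK, Nat.add_sub_assoc (by norm_num)]
  · refine card_filter_eq_zero_of_forall_smul_notMem hF (frobeniusForm_isAlt hF hε)
      (frobeniusForm_nondegenerate hε0) hg fun t ht => hgA ((hS.stable t ?_ g).1 ht)
    refine mem_erase.2 ⟨?_, mem_univ t⟩
    rintro rfl
    exact hS.zero_notMem (by rwa [zero_smul] at ht)

end RayUnion

theorem IsPrimitiveElt.diffCount_cycClass_four_zero (hα : IsPrimitiveElt α)
    (hF : Module.finrank K F = 2) (hK : Fintype.card K = 8 * k + 3) {g : F} (hg : g ≠ 0) :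
    diffCount (cycClass α 4 0) g =
      if g ∈ cycClass α 4 0 then (2 * k + 1) * (2 * k) + (4 * k + 1)
        else (2 * k + 1) * (2 * k) := by
  classical
  have hα0 := hα.ne_zero_of_finrank_eq_two hF hK
  obtain ⟨ε, hε0, hε⟩ := hα.exists_pow_card_eq_neg hF hK
  have hcount := (hα.isRayUnion_cycClass_four_zero hF hK).diffCount_of_erase_zero hF
    (frobeniusForm_isAlt hF hε) (frobeniusForm_nondegenerate hε0) hg
  have hcard := hα.card_cycClass_four_zero hα0 (card_sub_one_of_finrank_eq_two hF hK)
  have hzero := hα.card_filter_cycClass_four_zero hF hK hε hε0 hg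
  have hsplit := card_filter_add_card_filter_not (s := cycClass α 4 0)
    (fun u => frobeniusForm K ε g u = 0)
  rw [hcard, hzero] at hsplit
  rw [hzero, hK] at hcount
  zify at hsplit ⊢
  set R : ℤ := (#{u ∈ cycClass α 4 0 | frobeniusForm K ε g u ≠ 0} : ℤ)
  have hpos : (8 * (k : ℤ) + 2) ^ 2 ≠ 0 := by positivity
  apply mul_left_cancel₀ hpos
  split_ifs at hsplit hcount ⊢
  · have hR : R = (8 * k + 2) * (2 * k) := by linear_combination hsplit
    rw [hR] at hcount
    push_cast at hcount
    linear_combination hcount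
  · have hR : R = (8 * k + 2) * (2 * k + 1) := by linear_combination hsplit
    rw [hR] at hcount
    push_cast at hcount
    linear_combination hcount

end QuadraticSkewSet

section SkewCharSum

variable {K F : Type*} [Field K] [Fintype K] [DecidableEq K] [Field F] [Fintype F] [DecidableEq F]
  [Algebra K F] {α ε : F} {k : ℕ}

variable (K) in
/-- The quadratic character sum of the alternating form `frobeniusForm K ε` over `C_3^8 ∪ C_5^8`,
at the point `α ^ n`. -/
noncomputable def skewCharSum (α ε : F) (n : ℕ) : ℤ :=
  quadraticCharSum (frobeniusForm K ε) (skewSet α) (α ^ n)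

theorem IsPrimitiveElt.skewCharSum_periodic (hα : IsPrimitiveElt α)
    (hF : Module.finrank K F = 2) (hK : Fintype.card K = 8 * k + 3)
    (hε : ε ^ Fintype.card K = -ε) : Function.Periodic (skewCharSum K α ε) 8 := by
  intro n
  have hnorm : quadraticChar K (Algebra.norm K (α ^ 8)) = 1 := by
    rw [map_pow, map_pow, hα.quadraticChar_norm (ringChar_ne_two_of_card_eq hK)]
    norm_num
  rw [skewCharSum, add_comm, pow_add]
  exact quadraticCharSum_mul hF hε hnorm (hα.pow_eight_mul_mem_skewSet_iff
    (hα.ne_zero_of_finrank_eq_two hF hK) (eight_dvd_card_sub_one hF hK)) _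

theorem IsPrimitiveElt.skewCharSum_congr (hα : IsPrimitiveElt α)
    (hF : Module.finrank K F = 2) (hK : Fintype.card K = 8 * k + 3)
    (hε : ε ^ Fintype.card K = -ε) {i j : ℕ} (h : i % 8 = j % 8) :
    skewCharSum K α ε i = skewCharSum K α ε j := by
  have hper := hα.skewCharSum_periodic hF hK hε
  rw [← hper.map_mod_nat i, h, hper.map_mod_nat]

theorem IsPrimitiveElt.skewCharSum_add_four (hα : IsPrimitiveElt α)
    (hF : Module.finrank K F = 2) (hK : Fintype.card K = 8 * k + 3)
    (hε : ε ^ Fintype.card K = -ε) (n : ℕ) :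
    skewCharSum K α ε (n + 4) = -skewCharSum K α ε n := by
  have hsmul := quadraticCharSum_smul (ω := frobeniusForm K ε) (S := skewSet α)
    (Algebra.norm K α ^ 1) (α ^ n)
  rw [norm_pow_smul_pow hF, pow_one, hα.quadraticChar_norm (ringChar_ne_two_of_card_eq hK),
    neg_one_mul] at hsmul
  exact (hα.skewCharSum_congr hF hK hε (by rw [hK, add_mul_mod_eight])).trans hsmul

theorem IsPrimitiveElt.skewCharSum_mul_three (hα : IsPrimitiveElt α)
    (hF : Module.finrank K F = 2) (hK : Fintype.card K = 8 * k + 3)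
    (hε : ε ^ Fintype.card K = -ε) (n : ℕ) :
    skewCharSum K α ε (3 * n) = skewCharSum K α ε n := by
  rw [skewCharSum, ← quadraticCharSum_pow_card hF hε
    (fun _ => hα.neg_pow_card_mem_skewSet hF hK), ← pow_mul]
  refine hα.skewCharSum_congr hF hK hε ?_
  rw [hK, show 3 * n * (8 * k + 3) = n + 8 * (3 * n * k + n) by ring, Nat.add_mul_mod_self_left]

theorem IsPrimitiveElt.skewCharSum_of_mod_four_eq_two (hα : IsPrimitiveElt α)
    (hF : Module.finrank K F = 2) (hK : Fintype.card K = 8 * k + 3)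
    (hε : ε ^ Fintype.card K = -ε) {n : ℕ} (hn : n % 4 = 2) : skewCharSum K α ε n = 0 := by
  rw [← self_eq_neg, ← hα.skewCharSum_add_four hF hK hε, ← hα.skewCharSum_mul_three hF hK hε n]
  exact hα.skewCharSum_congr hF hK hε (by omega)

theorem IsPrimitiveElt.skewCharSum_sq_of_mod_four_eq_zero (hα : IsPrimitiveElt α)
    (hF : Module.finrank K F = 2) (hK : Fintype.card K = 8 * k + 3)
    (hε : ε ^ Fintype.card K = -ε) {n : ℕ} (hn : n % 4 = 0) :
    skewCharSum K α ε n ^ 2 = skewCharSum K α ε 0 ^ 2 := by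
  rcases (by omega : n % 8 = 0 ∨ n % 8 = 4) with h | h
  · rw [hα.skewCharSum_congr hF hK hε (i := n) (j := 0) h]
  · rw [hα.skewCharSum_congr hF hK hε (i := n) (j := 0 + 4) h,
      hα.skewCharSum_add_four hF hK hε, neg_sq]

theorem IsPrimitiveElt.skewCharSum_sq_of_odd (hα : IsPrimitiveElt α)
    (hF : Module.finrank K F = 2) (hK : Fintype.card K = 8 * k + 3)
    (hε : ε ^ Fintype.card K = -ε) {n : ℕ} (hn : n % 2 = 1) :
    skewCharSum K α ε n ^ 2 = skewCharSum K α ε 1 ^ 2 := by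
  rcases (by omega : n % 8 = 1 ∨ n % 8 = 3 ∨ n % 8 = 5 ∨ n % 8 = 7) with h | h | h | h
  · rw [hα.skewCharSum_congr hF hK hε (i := n) (j := 1) h]
  · rw [hα.skewCharSum_congr hF hK hε (i := n) (j := 3 * 1) h, hα.skewCharSum_mul_three hF hK hε]
  · rw [hα.skewCharSum_congr hF hK hε (i := n) (j := 1 + 4) h,
      hα.skewCharSum_add_four hF hK hε, neg_sq]
  · rw [hα.skewCharSum_congr hF hK hε (i := n) (j := 3 * 1 + 4) h,
      hα.skewCharSum_add_four hF hK hε, neg_sq, hα.skewCharSum_mul_three hF hK hε]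

theorem IsPrimitiveElt.card_sq_mul_diffCount_skewSet_of_even (hα : IsPrimitiveElt α)
    (hF : Module.finrank K F = 2) (hK : Fintype.card K = 8 * k + 3)
    (hε : ε ^ Fintype.card K = -ε) (hε0 : ε ≠ 0) {n : ℕ} (hn : n % 2 = 0) :
    4 * (4 * (k : ℤ) + 1) ^ 2 * diffCount (skewSet α) (α ^ n) =
      (4 * k + 1) ^ 2 * (8 * k * (2 * k + 1)) + skewCharSum K α ε n ^ 2 := by
  have hα0 := hα.ne_zero_of_finrank_eq_two hF hK
  have hcount := (hα.isRayUnion_skewSet hF hK).diffCount_of_nonzeroSquares (by omega) hF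
    (frobeniusForm_isAlt hF hε) (frobeniusForm_nondegenerate hε0) (pow_ne_zero n hα0)
  have hzero := hα.card_filter_skewSet_of_even hF hK hε hε0 hn
  have hsplit := card_filter_add_card_filter_not (s := skewSet α)
    (fun u => frobeniusForm K ε (α ^ n) u = 0)
  rw [hα.card_skewSet hα0 (card_sub_one_of_finrank_eq_two hF hK), hzero, zero_add] at hsplit
  rw [hzero, hsplit, card_nonzeroSquares_of_card_eq hK, ← skewCharSum] at hcount
  push_cast at hcount
  linear_combination hcount

theorem IsPrimitiveElt.card_sq_mul_diffCount_skewSet_of_odd (hα : IsPrimitiveElt α)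
    (hF : Module.finrank K F = 2) (hK : Fintype.card K = 8 * k + 3)
    (hε : ε ^ Fintype.card K = -ε) (hε0 : ε ≠ 0) {n : ℕ} (hn : n % 2 = 1) :
    4 * (4 * (k : ℤ) + 1) ^ 2 * diffCount (skewSet α) (α ^ n) =
      (4 * k + 1) ^ 2 * (8 * k * (2 * k + 1) - 1) + skewCharSum K α ε n ^ 2 := by
  have hα0 := hα.ne_zero_of_finrank_eq_two hF hK
  have hcount := (hα.isRayUnion_skewSet hF hK).diffCount_of_nonzeroSquares (by omega) hF
    (frobeniusForm_isAlt hF hε) (frobeniusForm_nondegenerate hε0) (pow_ne_zero n hα0)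
  have hzero := hα.card_filter_skewSet_of_odd hF hK hε hε0 hn
  have hsplit := card_filter_add_card_filter_not (s := skewSet α)
    (fun u => frobeniusForm K ε (α ^ n) u = 0)
  rw [hα.card_skewSet hα0 (card_sub_one_of_finrank_eq_two hF hK), hzero] at hsplit
  have hnonzero : #{u ∈ skewSet α | ¬frobeniusForm K ε (α ^ n) u = 0} =
      (4 * k + 1) * (4 * k + 1) := by linear_combination hsplit
  rw [hzero, hnonzero, card_nonzeroSquares_of_card_eq hK, ← skewCharSum] at hcount
  push_cast at hcount
  linear_combination hcount

theorem IsPrimitiveElt.dvd_skewCharSum (hα : IsPrimitiveElt α)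
    (hF : Module.finrank K F = 2) (hK : Fintype.card K = 8 * k + 3)
    (hε : ε ^ Fintype.card K = -ε) (hε0 : ε ≠ 0) (n : ℕ) :
    4 * (k : ℤ) + 1 ∣ skewCharSum K α ε n := by
  rw [← Int.pow_dvd_pow_iff two_ne_zero]
  rcases n.mod_two_eq_zero_or_one with hn | hn
  · have := hα.card_sq_mul_diffCount_skewSet_of_even hF hK hε hε0 hn
    exact ⟨4 * diffCount (skewSet α) (α ^ n) - 8 * k * (2 * k + 1), by linear_combination -this⟩
  · have := hα.card_sq_mul_diffCount_skewSet_of_odd hF hK hε hε0 hn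
    exact ⟨4 * diffCount (skewSet α) (α ^ n) - (8 * k * (2 * k + 1) - 1),
      by linear_combination -this⟩

theorem IsPrimitiveElt.sum_range_diffCount_skewSet (hα : IsPrimitiveElt α) (hα0 : α ≠ 0) {f : ℕ}
    (hf : Fintype.card F - 1 = f * 8) :
    ∑ n ∈ range 8, (diffCount (skewSet α) (α ^ n) : ℤ) = 4 * f - 2 := by
  have h8 : 8 ∣ Fintype.card F - 1 := Dvd.intro_left f hf.symm
  have hf0 : (f : ℤ) ≠ 0 := by have := Fintype.one_lt_card (α := F); omega
  have h0 : (0 : F) ∉ ({α ^ 8} : Finset F) :=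
    notMem_singleton.2 (pow_ne_zero 8 hα0).symm
  have hstable : SMulStable {α ^ 8} (skewSet α) := fun a ha u => by
    rw [mem_singleton.1 ha, smul_eq_mul, hα.pow_eight_mul_mem_skewSet_iff hα0 h8]
  have hper (n : ℕ) : (diffCount (skewSet α) (α ^ (n + 8)) : ℤ) =
      diffCount (skewSet α) (α ^ n) := by
    rw [pow_add, mul_comm, ← smul_eq_mul,
      diffCount_smul h0 hstable (mem_singleton_self _)]
  have hsum := hα.sum_erase_zero_of_periodic hα0
    (φ := fun g => (diffCount (skewSet α) g : ℤ)) hf hper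
  rw [sum_diffCount, hα.card_skewSet hα0 hf, nsmul_eq_mul] at hsum
  apply mul_left_cancel₀ hf0
  push_cast at hsum
  linear_combination -hsum

theorem IsPrimitiveElt.two_mul_skewCharSum_sq_add_sq (hα : IsPrimitiveElt α)
    (hF : Module.finrank K F = 2) (hK : Fintype.card K = 8 * k + 3)
    (hε : ε ^ Fintype.card K = -ε) (hε0 : ε ≠ 0) :
    2 * skewCharSum K α ε 1 ^ 2 + skewCharSum K α ε 0 ^ 2 = 2 * (4 * k + 1) ^ 2 * (8 * k + 3) := by
  have hsum := hα.sum_range_diffCount_skewSet (hα.ne_zero_of_finrank_eq_two hF hK)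
    (card_sub_one_of_finrank_eq_two hF hK)
  have heven {n : ℕ} := hα.card_sq_mul_diffCount_skewSet_of_even hF hK hε hε0 (n := n)
  have hodd {n : ℕ} := hα.card_sq_mul_diffCount_skewSet_of_odd hF hK hε hε0 (n := n)
  have hzero {n : ℕ} := hα.skewCharSum_of_mod_four_eq_two hF hK hε (n := n)
  have hsq {n : ℕ} := hα.skewCharSum_sq_of_odd hF hK hε (n := n)
  simp only [sum_range_succ, sum_range_zero, zero_add] at hsum
  push_cast at hsum
  have h0 := heven (n := 0) (by norm_num)
  have h1 := hodd (n := 1) (by norm_num)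
  have h2 := heven (n := 2) (by norm_num)
  have h3 := hodd (n := 3) (by norm_num)
  have h4 := heven (n := 4) (by norm_num)
  have h5 := hodd (n := 5) (by norm_num)
  have h6 := heven (n := 6) (by norm_num)
  have h7 := hodd (n := 7) (by norm_num)
  rw [hzero (by norm_num)] at h2 h6
  rw [hsq (by norm_num)] at h3 h5 h7
  rw [hα.skewCharSum_sq_of_mod_four_eq_zero hF hK hε (by norm_num)] at h4
  apply mul_left_cancel₀ (two_ne_zero (α := ℤ))
  linear_combination 4 * (4 * (k : ℤ) + 1) ^ 2 * hsum - h0 - h1 - h2 - h3 - h4 - h5 - h6 - h7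

end SkewCharSum

section CharSumPoly

open Polynomial

variable {K F : Type*} [Field K] [Fintype K] [DecidableEq K] [Field F] [Algebra K F] {ε : F}

/-- The polynomial `∑ u ∈ S, u ^ m * (X - u ^ (2 * m)) ^ m`. By Euler's criterion, its value at
`x ^ (2 * m)` is the image in `F` of the quadratic character sum of `frobeniusForm K ε` at `x`, up
to the factor `(ε * x) ^ m`, when `K` has `2 * m + 1` elements. -/
noncomputable def charSumPoly (S : Finset F) (m : ℕ) : F[X] :=
  ∑ u ∈ S, C (u ^ m) * (X + C (-u ^ (2 * m))) ^ m

theorem natDegree_charSumPoly_le (S : Finset F) (m : ℕ) : (charSumPoly S m).natDegree ≤ m := by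
  refine natDegree_sum_le_of_forall_le S _ fun u _ => (natDegree_C_mul_le _ _).trans ?_
  rw [natDegree_pow, natDegree_X_add_C, mul_one]

theorem coeff_charSumPoly (S : Finset F) (m j : ℕ) :
    (charSumPoly S m).coeff j =
      (-1) ^ (m - j) * m.choose j * ∑ u ∈ S, u ^ (m + 2 * m * (m - j)) := by
  rw [charSumPoly, finsetSum_coeff, mul_sum]
  refine sum_congr rfl fun u _ => ?_
  rw [coeff_C_mul, coeff_X_add_C_pow, neg_pow]
  ring

theorem intCast_quadraticCharSum_frobeniusForm [Finite F] (hF : Module.finrank K F = 2)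
    (hε : ε ^ Fintype.card K = -ε) {m : ℕ} (hm : Fintype.card K = 2 * m + 1) (S : Finset F)
    (x : F) : (quadraticCharSum (frobeniusForm K ε) S x : F) =
      (ε * x) ^ m * (charSumPoly S m).eval (x ^ (2 * m)) := by
  have hK2 : ringChar K ≠ 2 := fun h => by
    have := FiniteField.even_card_of_char_two h
    omega
  have euler (a : K) : (quadraticChar K a : F) = algebraMap K F a ^ m := by
    rw [← map_pow, ← map_intCast (algebraMap K F), quadraticChar_eq_pow_of_char_ne_two' hK2, hm,
      Nat.mul_add_div two_pos, Nat.div_eq_of_lt one_lt_two, add_zero]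
  rw [quadraticCharSum, Int.cast_sum, charSumPoly, eval_finsetSum, mul_sum]
  refine sum_congr rfl fun u _ => ?_
  rw [euler, algebraMap_frobeniusForm hF hε, hm, eval_mul, eval_C, eval_pow, eval_add, eval_X,
    eval_C, ← mul_pow, ← mul_pow]
  ring

theorem exists_intCast_quadraticCharSum_ne_zero [Finite F] (hF : Module.finrank K F = 2)
    (hε : ε ^ Fintype.card K = -ε) (hε0 : ε ≠ 0) {m : ℕ} (hm : Fintype.card K = 2 * m + 1)
    {S : Finset F} (hS : charSumPoly S m ≠ 0) :
    ∃ x : F, x ≠ 0 ∧ (quadraticCharSum (frobeniusForm K ε) S x : F) ≠ 0 := by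
  classical
  let := Fintype.ofFinite F
  have hm0 : 0 < m := by have := Fintype.one_lt_card (α := K); omega
  by_contra! hzero
  refine hS ((expand_eq_zero (by positivity : 0 < 2 * m)).1
    (eq_zero_of_natDegree_lt_card_of_eval_eq_zero' _ (univ.erase 0) (fun x hx => ?_) ?_))
  · have hx0 : x ≠ 0 := ne_of_mem_erase hx
    have hx := hzero x hx0
    rw [intCast_quadraticCharSum_frobeniusForm hF hε hm] at hx
    rw [expand_eval]
    exact (mul_eq_zero.1 hx).resolve_left (pow_ne_zero m (mul_ne_zero hε0 hx0))
  · rw [natDegree_expand, card_erase_of_mem (mem_univ 0), card_univ,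
      Module.card_eq_pow_finrank (K := K), hF, hm]
    calc (charSumPoly S m).natDegree * (2 * m) ≤ m * (2 * m) :=
          Nat.mul_le_mul_right _ (natDegree_charSumPoly_le S m)
      _ < 4 * m ^ 2 + 4 * m := by nlinarith
      _ = (2 * m + 1) ^ 2 - 1 := (Nat.sub_eq_of_eq_add (by ring)).symm

end CharSumPoly

section PrimePower

variable {K F : Type*} [Field K] [Fintype K] [Field F] [Fintype F] [DecidableEq F]
  [Algebra K F] {α ε : F} {p n k : ℕ}

theorem IsPrimitiveElt.charSumPoly_skewSet_ne_zero [CharP F p] (hα : IsPrimitiveElt α)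
    (hα0 : α ≠ 0) (hF : Fintype.card F - 1 = (4 * k + 1) * (2 * k + 1) * 8)
    (hpn : p ^ n = 8 * k + 3) : charSumPoly (skewSet α) (4 * k + 1) ≠ 0 := by
  intro h0
  have hcoeff := coeff_charSumPoly (skewSet α) (4 * k + 1) k
  have hexp : 4 * k + 1 + 2 * (4 * k + 1) * (4 * k + 1 - k) =
      3 * ((4 * k + 1) * (2 * k + 1)) := by
    rw [show 4 * k + 1 - k = 3 * k + 1 by omega]
    ring
  rw [h0, Polynomial.coeff_zero, hexp] at hcoeff
  refine mul_ne_zero (mul_ne_zero (by simp) ?_) (hα.sum_skewSet_pow_ne_zero hα0 hF) hcoeff.symm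
  rw [Ne, CharP.cast_eq_zero_iff F p]
  exact not_dvd_choose_of_pow_eq (CharP.char_is_prime F p) hpn

section Divisibility

variable [DecidableEq K]

theorem IsPrimitiveElt.exists_not_dvd_skewCharSum [CharP F p] (hα : IsPrimitiveElt α)
    (hF : Module.finrank K F = 2) (hK : Fintype.card K = 8 * k + 3)
    (hε : ε ^ Fintype.card K = -ε) (hε0 : ε ≠ 0) (hpn : p ^ n = 8 * k + 3) :
    ∃ i, ¬ (p : ℤ) ∣ skewCharSum K α ε i := by
  obtain ⟨x, hx, hne⟩ := exists_intCast_quadraticCharSum_ne_zero hF hε hε0 (m := 4 * k + 1)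
    (hK.trans (by ring)) (hα.charSumPoly_skewSet_ne_zero (hα.ne_zero_of_finrank_eq_two hF hK)
      (card_sub_one_of_finrank_eq_two hF hK) hpn)
  obtain ⟨i, rfl⟩ := hα x hx
  exact ⟨i, (CharP.intCast_eq_zero_iff F p _).not.1 hne⟩

theorem IsPrimitiveElt.not_dvd_skewCharSum_one [CharP F p] (hα : IsPrimitiveElt α)
    (hF : Module.finrank K F = 2) (hK : Fintype.card K = 8 * k + 3)
    (hε : ε ^ Fintype.card K = -ε) (hε0 : ε ≠ 0) (hpn : p ^ n = 8 * k + 3) :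
    ¬ (p : ℤ) ∣ skewCharSum K α ε 1 := by
  intro h1
  have hpz : Prime (p : ℤ) := Nat.prime_iff_prime_int.1 (CharP.char_is_prime F p)
  have hn : n ≠ 0 := by
    rintro rfl
    rw [pow_zero] at hpn
    omega
  have hpl : (p : ℤ) ∣ 8 * k + 3 := by exact_mod_cast hpn ▸ dvd_pow_self p hn
  have h0 : (p : ℤ) ∣ skewCharSum K α ε 0 := by
    refine hpz.dvd_of_dvd_pow (n := 2) ((dvd_add_right ((dvd_pow h1 two_ne_zero).mul_left 2)).1 ?_)
    rw [hα.two_mul_skewCharSum_sq_add_sq hF hK hε hε0]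
    exact hpl.mul_left _
  obtain ⟨i, hi⟩ := hα.exists_not_dvd_skewCharSum hF hK hε hε0 hpn
  refine hi (hpz.dvd_of_dvd_pow (n := 2) ?_)
  rcases (by omega : i % 4 = 0 ∨ i % 4 = 2 ∨ i % 2 = 1) with h | h | h
  · rw [hα.skewCharSum_sq_of_mod_four_eq_zero hF hK hε h]
    exact dvd_pow h0 two_ne_zero
  · simp [hα.skewCharSum_of_mod_four_eq_two hF hK hε h]
  · rw [hα.skewCharSum_sq_of_odd hF hK hε h]
    exact dvd_pow h1 two_ne_zero

theorem IsPrimitiveElt.skewCharSum_one_sq [CharP F p] (hα : IsPrimitiveElt α)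
    (hF : Module.finrank K F = 2) (hK : Fintype.card K = 8 * k + 3)
    (hε : ε ^ Fintype.card K = -ε) (hε0 : ε ≠ 0) (hpn : p ^ n = 8 * k + 3) {w : ℤ}
    (hw : w ^ 2 = 4 * k + 1) : skewCharSum K α ε 1 ^ 2 = (4 * k + 1) ^ 2 := by
  have hp : p.Prime := CharP.char_is_prime F p
  have hp2 : p ≠ 2 := by
    have := mod_eight_eq_three_of_pow_mod_eight_eq_three (p := p) (n := n) (by omega)
    omega
  have hn : n ≠ 0 := by
    rintro rfl
    rw [pow_zero] at hpn
    omega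
  have hpnz : (p : ℤ) ^ n = 8 * k + 3 := by exact_mod_cast hpn
  have hsum := hα.two_mul_skewCharSum_sq_add_sq hF hK hε hε0
  have hndvd := hα.not_dvd_skewCharSum_one hF hK hε hε0 hpn
  obtain ⟨x, hx⟩ := hα.dvd_skewCharSum hF hK hε hε0 1
  obtain ⟨z, hz⟩ := hα.dvd_skewCharSum hF hK hε hε0 0
  rw [hx] at hndvd hsum ⊢
  rw [hz] at hsum
  have hxz : 2 * x ^ 2 + z ^ 2 = 2 * (8 * k + 3) :=
    mul_left_cancel₀ (by positivity : (4 * (k : ℤ) + 1) ^ 2 ≠ 0) (by linear_combination hsum)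
  obtain ⟨y, rfl⟩ : (2 : ℤ) ∣ z := Int.prime_two.dvd_of_dvd_pow (n := 2)
    ((dvd_add_right (dvd_mul_right 2 _)).1 (hxz ▸ dvd_mul_right 2 _))
  have hx1 : 1 ^ 2 = x ^ 2 := sq_eq_sq_of_sq_add_mul_sq_eq_prime_pow (d := 2) (b := w) (y := y)
    hp hp2 hn le_rfl (by linear_combination 2 * hw - hpnz) (by linarith)
    (by exact_mod_cast hp.not_dvd_one) fun h => hndvd (h.mul_left _)
  rw [mul_pow, ← hx1, one_pow, mul_one]

end Divisibility

theorem IsPrimitiveElt.diffCount_skewSet [CharP F p] (hα : IsPrimitiveElt α)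
    (hF : Module.finrank K F = 2) (hK : Fintype.card K = 8 * k + 3) (hpn : p ^ n = 8 * k + 3)
    {w : ℤ} (hw : w ^ 2 = 4 * k + 1) {g : F} (hg : g ≠ 0) :
    diffCount (skewSet α) g =
      if g ∈ cycClass α 4 0 then (2 * k + 1) * (2 * k) + (4 * k + 1)
        else (2 * k + 1) * (2 * k) := by
  classical
  obtain ⟨i, rfl⟩ := hα g hg
  obtain ⟨ε, hε0, hε⟩ := hα.exists_pow_card_eq_neg hF hK
  have hone := hα.skewCharSum_one_sq hF hK hε hε0 hpn hw
  have hsum := hα.two_mul_skewCharSum_sq_add_sq hF hK hε hε0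
  simp only [hα.pow_mem_cycClass_four_zero_iff (hα.ne_zero_of_finrank_eq_two hF hK)
    (eight_dvd_card_sub_one hF hK)]
  rw [← Nat.cast_inj (R := ℤ)]
  apply mul_left_cancel₀ (by positivity : 4 * (4 * (k : ℤ) + 1) ^ 2 ≠ 0)
  rcases (by omega : i % 4 = 0 ∨ i % 4 = 2 ∨ i % 2 = 1) with h | h | h
  · have hzero := hα.skewCharSum_sq_of_mod_four_eq_zero hF hK hε h
    rw [if_pos h, hα.card_sq_mul_diffCount_skewSet_of_even hF hK hε hε0 (by omega)]
    push_cast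
    linear_combination hzero + hsum - 2 * hone
  · have htwo := hα.skewCharSum_of_mod_four_eq_two hF hK hε h
    rw [if_neg (by omega), hα.card_sq_mul_diffCount_skewSet_of_even hF hK hε hε0 (by omega), htwo]
    push_cast
    ring
  · have hodd := hα.skewCharSum_sq_of_odd hF hK hε h
    rw [if_neg (by omega), hα.card_sq_mul_diffCount_skewSet_of_odd hF hK hε hε0 h]
    push_cast
    linear_combination hodd + hone

theorem IsPrimitiveElt.isSkewPDS_skewSet [CharP F p] (hα : IsPrimitiveElt α)
    (hF : Module.finrank K F = 2) (hK : Fintype.card K = 8 * k + 3) (hpn : p ^ n = 8 * k + 3)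
    {w : ℤ} (hw : w ^ 2 = 4 * k + 1) :
    IsSkewPDS (skewSet α) (cycClass α 4 0) (Fintype.card F) ((Fintype.card F - 1) / 4)
      ((2 * k + 1) * (2 * k) + (4 * k + 1)) ((2 * k + 1) * (2 * k)) := by
  have hα0 := hα.ne_zero_of_finrank_eq_two hF hK
  have hcard := card_sub_one_of_finrank_eq_two hF hK
  have hquarter : (Fintype.card F - 1) / 4 = 2 * ((4 * k + 1) * (2 * k + 1)) := by omega
  rw [hquarter]
  exact ⟨⟨rfl, hα.card_cycClass_four_zero hα0 hcard,
      intDiff_eq_of_diffCount_eq fun _ => hα.diffCount_cycClass_four_zero hF hK⟩,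
    hα.card_skewSet hα0 hcard,
    intDiff_eq_of_diffCount_eq fun _ => hα.diffCount_skewSet hF hK hpn hw⟩

end PrimePower

theorem exists_algebra_galoisField_finrank_eq {F : Type*} [Field F] [Fintype F] {p n d : ℕ}
    [Fact p.Prime] (hn : n ≠ 0) (hF : Fintype.card F = p ^ (n * d)) :
    ∃ _ : Algebra (GaloisField p n) F, Module.finrank (GaloisField p n) F = d := by
  have : CharP F p := charP_of_card_eq_prime_pow hF
  let := ZMod.algebra F p
  have hp : 1 < p := (Fact.out : p.Prime).one_lt
  have hrank : Module.finrank (ZMod p) F = n * d :=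
    Nat.pow_right_injective hp ((FiniteField.pow_finrank_eq_card p F).trans hF)
  obtain ⟨f⟩ := FiniteField.nonempty_algHom_of_finrank_dvd (F := ZMod p) (K := GaloisField p n)
    (L := F) (by rw [GaloisField.finrank p hn, hrank]; exact dvd_mul_right n d)
  let := f.toAlgebra
  refine ⟨this, Nat.eq_of_mul_eq_mul_left (Nat.pos_of_ne_zero hn) ?_⟩
  rw [← hrank, ← Module.finrank_mul_finrank (ZMod p) (GaloisField p n) F, GaloisField.finrank p hn]

/-- Let `ℓ ≡ 3 (mod 8)` be a prime power of the form `ℓ = c²/2 + 1`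
(i.e. `c² = 2(ℓ - 1)`) for some integer `c`, and let `q = ℓ²`.  Then
`D = C_3^8 ∪ C_5^8` is a skew PDS in `F_q` corresponding to the
`(q,(q-1)/4,(q-11+6ℓ)/16,(q-3-2ℓ)/16)`-PDS `C_0^4`. -/
theorem stmt_5 {F : Type*} [Field F] [Fintype F] [DecidableEq F]
    (l : ℕ) (hlpp : IsPrimePow l) (hl8 : l % 8 = 3)
    (c : ℤ) (hc : c ^ 2 = 2 * ((l : ℤ) - 1))
    (q : ℕ) (hq : Fintype.card F = q) (hql : q = l ^ 2)
    (α : F) (hα : IsPrimitiveElt α) :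
    ∃ lam mu : ℕ,
      16 * (lam : ℤ) = (q : ℤ) - 11 + 6 * l ∧
      16 * (mu : ℤ) = (q : ℤ) - 3 - 2 * l ∧
      IsSkewPDS (cycClass α 8 3 ∪ cycClass α 8 5) (cycClass α 4 0)
        q ((q - 1) / 4) lam mu := by
  classical
  obtain ⟨p, n, hp, hn, rfl⟩ := (isPrimePow_nat_iff l).1 hlpp
  obtain ⟨k, hpn⟩ : ∃ k, p ^ n = 8 * k + 3 := ⟨p ^ n / 8, by omega⟩
  have : Fact p.Prime := ⟨hp⟩
  have hcard : Fintype.card F = p ^ (n * 2) := by rw [hq, hql, pow_mul]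
  have : CharP F p := charP_of_card_eq_prime_pow hcard
  obtain ⟨_, hF⟩ := exists_algebra_galoisField_finrank_eq hn.ne' hcard
  let := Fintype.ofFinite (GaloisField p n)
  have hK : Fintype.card (GaloisField p n) = 8 * k + 3 := by
    rw [← Nat.card_eq_fintype_card, GaloisField.card p n hn.ne', hpn]
  obtain ⟨w, rfl⟩ : (2 : ℤ) ∣ c := Int.prime_two.dvd_of_dvd_pow (hc ▸ dvd_mul_right 2 _)
  have hw : w ^ 2 = 4 * k + 1 := by
    rw [hpn] at hc
    push_cast at hc
    linarith
  refine ⟨(2 * k + 1) * (2 * k) + (4 * k + 1), (2 * k + 1) * (2 * k), ?_, ?_,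
    hq ▸ hα.isSkewPDS_skewSet hF hK hpn hw⟩ <;>
  · rw [hql, hpn]
    push_cast
    ring
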